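/- Assume f is locally surjective at 0 and the derivative Df(x) : ℝ^{n+2} → ℝ² is surjective for every x ∈ U \ {0} (0 is an isolated critical point). Then there exists ε₀ > 0 such that for every 0 < ε ≤ ε₀ there exists η₀ > 0 such that for every 0 < η ≤ η₀ the restriction of f to the Milnor tube N(ε,η) = {x ∈ B̄(0,ε) : ‖f(x)‖ = η} is a locally trivial fibration N(ε,η) → {w ∈ ℝ² : ‖w‖ = η}. -/

import Mathlib

/-!
The proof follows Milnor and Ehresmann: the rotation field of the plane is lifted through `f` to a
vector field near the tube which is tangent to the boundary sphere, and its flow moves the fibres onto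
each other. The target `ℝ²` is identified with `ℂ` for this.

* *Transversality* (`eventually_transverse_spheres`). Near `0`, at each `x ≠ 0` with `f x = 0`, some
  vector in the kernel of `Df(x)` is not orthogonal to `x`. Instead of the curve selection lemma, the
  proof works in a residue field `L` of the ring of germs of functions along the set of bad points,
  where `f = 0` and `x = ∑ a_j ∇f_j`. The class of `‖x‖²` in `L` is transcendental over `ℝ`, so that
  some derivation of `L` is nonzero on it; if this derivation satisfies the chain rule for analytic
  functions (`exists_vector_of_transcendental`), then `D ‖x‖² = 2 ∑ a_j D f_j = 0`, a contradiction.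
  The chain rule is obtained by induction on the dimension: analytic relations between the
  coordinates are eliminated by Weierstrass division (`weierstrass_division`), and for a point without
  relations the directional derivatives themselves extend to `L`.

* *Small tubes*. As `Df(x)` is onto for `x ≠ 0`, transversality makes `(Df(x), ⟪x, ·⟫)` onto at the
  points of `V` on the sphere of radius `ε`, and by compactness at the points of that sphere where
  `‖f‖` is small. This determines `η₀`.

* *Lifting the rotation* (`exists_adapted_field`, `exists_tube_flow`). A partition of unity gives a
  compactly supported `C¹` field `X` with `Df · X = i f` near the tube and `X` tangent to the spheres
  near the boundary of the tube. Its integral curves stay in the tube, and `f` rotates along them.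

* *Trivialisation* (`isLocTrivFib_of_rotation`). Flowing back by a local determination of the argument
  identifies the part of the tube over an arc with the product of the arc and a fibre.
-/

/-- `p : Z → B` is a locally trivial fibration (with some fibre `F`). -/
def IsLocTrivFib {Z B : Type} [TopologicalSpace Z] [TopologicalSpace B] (p : Z → B) : Prop :=
  ∃ (F : Type) (_ : TopologicalSpace F), Continuous p ∧
    ∀ b : B, ∃ W : Set B, IsOpen W ∧ b ∈ W ∧
      ∃ e : (p ⁻¹' W) ≃ₜ (W × F), ∀ z : (p ⁻¹' W), ((e z).1 : B) = p (z : Z)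

/-! ### Extension of derivations -/

section

open TensorProduct

/-- A derivation of a subring `A` of a field `L` of characteristic zero extends to `L`: since `L` is
formally smooth over `A`, the map `L ⊗ Ω[A⁄R] → Ω[L⁄R]` is injective, hence split over `L`. -/
theorem exists_derivation_extension (R : Type) {A L : Type} [CommRing R] [CommRing A] [IsDomain A]
    [Field L] [CharZero L] [Algebra R A] [Algebra R L] [Algebra A L] [IsScalarTower R A L]
    (hinj : Function.Injective (algebraMap A L)) (δ : Derivation R A L) :
    ∃ D : Derivation R L L, ∀ a, D (algebraMap A L a) = δ a := by
  have : FaithfulSMul A L := (faithfulSMul_iff_algebraMap_injective A L).2 hinj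
  let : Algebra (FractionRing A) L := FractionRing.liftAlgebra A L
  have hsm : Algebra.FormallySmooth A L := by
    have h1 : Algebra.FormallySmooth A (FractionRing A) :=
      .of_isLocalization (nonZeroDivisors A)
    have h2 : Algebra.FormallySmooth (FractionRing A) L := by
      obtain ⟨ι, v, hv⟩ := exists_isTranscendenceBasis' (FractionRing A) L
      have : Algebra.IsAlgebraic (IntermediateField.adjoin (FractionRing A) (Set.range v)) L :=
        hv.isAlgebraic_field
      have : CharZero (FractionRing A) := ⟨fun a b h => Nat.cast_injective (R := L) (by
        simpa using congrArg (algebraMap (FractionRing A) L) h)⟩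
      exact .of_algebraicIndependent_of_isSeparable hv.1
    exact .comp A (FractionRing A) L
  have hinj : Function.Injective (KaehlerDifferential.mapBaseChange R A L) := by
    rw [injective_iff_map_eq_zero]
    intro x hx
    obtain ⟨y, rfl⟩ := (Algebra.H1Cotangent.exact_δ_mapBaseChange R A L x).1 hx
    rw [Subsingleton.elim y 0, map_zero]
  obtain ⟨r, hr⟩ := LinearMap.exists_leftInverse_of_injective
    (KaehlerDifferential.mapBaseChange R A L) (LinearMap.ker_eq_bot.2 hinj)
  let φ : L ⊗[A] Ω[A⁄R] →ₗ[L] L := TensorProduct.AlgebraTensorModule.lift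
    (LinearMap.toSpanSingleton L _ δ.liftKaehlerDifferential)
  refine ⟨(φ ∘ₗ r).compDer (KaehlerDifferential.D R L), fun a => ?_⟩
  have : KaehlerDifferential.D R L (algebraMap A L a) =
    KaehlerDifferential.mapBaseChange R A L (1 ⊗ₜ KaehlerDifferential.D R A a) := by simp
  have h2 := LinearMap.congr_fun hr (1 ⊗ₜ KaehlerDifferential.D R A a)
  simp only [LinearMap.comp_apply, LinearMap.id_apply] at h2
  change φ (r (KaehlerDifferential.D R L (algebraMap A L a))) = δ a
  rw [this, h2]
  change LinearMap.toSpanSingleton L _ δ.liftKaehlerDifferential 1 (KaehlerDifferential.D R A a) = _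
  simp

open Polynomial in
/-- The derivation `d/dX` of `K[X] ≅ K[y]` extends to `L`. -/
theorem exists_derivation_of_transcendental {K L : Type} [Field K] [Field L] [CharZero L]
    [Algebra K L] {y : L} (hy : Transcendental K y) : ∃ D : Derivation K L L, D y ≠ 0 := by
  let : Algebra K[X] L := (aeval y).toAlgebra
  have : IsScalarTower K K[X] L := .of_algebraMap_eq' (by ext x; simp [RingHom.algebraMap_toAlgebra])
  obtain ⟨D, hD⟩ := exists_derivation_extension K (A := K[X]) (L := L)
    (transcendental_iff_injective.1 hy) (Polynomial.mkDerivation K (1 : L))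
  refine ⟨D, ?_⟩
  have := hD X
  rw [show algebraMap K[X] L X = y from aeval_X y] at this
  simp [this]

end

/-! ### Expansion of analytic functions along a direction -/

section

open Filter Topology NNReal ENNReal

/-- The norms of the coefficients of the re-expansion of a power series around nearby points are
summable over both indices. -/
theorem summable_norm_changeOriginSeries {E : Type*} [NormedAddCommGroup E] [NormedSpace ℝ E]
    (p : FormalMultilinearSeries ℝ E ℝ) {r : ℝ≥0} (hrad : ((r : ℝ≥0∞) + r) < p.radius) :
    Summable fun kl : ℕ × ℕ =>
      ‖p.changeOriginSeries kl.1 kl.2‖ * (r : ℝ) ^ kl.2 * (r : ℝ) ^ kl.1 := by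
  have h1 := p.changeOriginSeries_summable_aux₁ hrad
  have h2 : Summable fun kl : (Σ _ : ℕ, ℕ) =>
      ‖p.changeOriginSeries kl.1 kl.2‖₊ * r ^ kl.2 * r ^ kl.1 := by
    have h1' : Summable fun s : (Σ kl : (Σ _ : ℕ, ℕ),
        { s : Finset (Fin (kl.1 + kl.2)) // s.card = kl.2 }) =>
        ‖p (s.1.1 + s.1.2)‖₊ * r ^ s.1.2 * r ^ s.1.1 := by
      exact ((Equiv.sigmaAssoc (fun (k l : ℕ) =>
        { s : Finset (Fin (k + l)) // s.card = l })).summable_iff).2 h1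
    refine NNReal.summable_of_le (fun kl => ?_) (NNReal.summable_sigma.1 h1').2
    dsimp only
    rw [NNReal.tsum_mul_right, NNReal.tsum_mul_right]
    gcongr
    exact p.nnnorm_changeOriginSeries_le_tsum _ _
  have h3 := (Equiv.sigmaEquivProd ℕ ℕ).symm.summable_iff.2 h2
  have h4 := NNReal.summable_coe.2 h3
  exact h4

set_option maxHeartbeats 1000000 in
/-- Expansion of an analytic function in powers of `t` along the lines `x + ℝ e`, with coefficients
`c k` depending analytically on `x`. Analyticity is stated uniformly in `k`: every series
`∑ c k x • m k` with `‖m k‖ ≤ ρ ^ k` in a Banach space is analytic in `x`. This makes the sequence of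
coefficients usable as a single analytic map into a space of sequences or operators. -/
theorem exists_slice_expansion {E : Type*} [NormedAddCommGroup E] [NormedSpace ℝ E]
    (e : E) {f : E → ℝ} (hf : AnalyticAt ℝ f 0) :
    ∃ (c : ℕ → E → ℝ) (ρ : ℝ), 0 < ρ ∧
      (∀ᶠ x in 𝓝 (0 : E), ∀ t : ℝ, |t| < ρ → HasSum (fun k => c k x * t ^ k) (f (x + t • e))) ∧
      (∀ᶠ x in 𝓝 (0 : E), Summable fun k => |c k x| * ρ ^ k) ∧
      (∀ (Y : Type) [NormedAddCommGroup Y] [NormedSpace ℝ Y] [CompleteSpace Y] (m : ℕ → Y),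
        (∀ k, ‖m k‖ ≤ ρ ^ k) → AnalyticAt ℝ (fun x => ∑' k, c k x • m k) 0) := by
  obtain ⟨p, R, hp⟩ := hf
  obtain ⟨r, hr0, hr⟩ : ∃ r : ℝ≥0, 0 < r ∧ ((r + r : ℝ≥0) : ℝ≥0∞) < R := by
    obtain ⟨s, hs0, hs⟩ := ENNReal.lt_iff_exists_nnreal_btwn.1 hp.r_pos
    refine ⟨s / 2, by simpa using hs0, by simpa using hs⟩
  have hrad : ((r : ℝ≥0∞) + r) < p.radius := by
    have := hr.trans_le hp.r_le
    simpa using this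
  -- `ρ` is chosen so that `ρ ‖e‖ ≤ r`
  obtain ⟨ρ, hρ0, hρ⟩ : ∃ ρ : ℝ≥0, 0 < ρ ∧ ρ * ‖e‖₊ ≤ r := by
    refine ⟨r / (‖e‖₊ + 1), by positivity, ?_⟩
    rw [div_mul_eq_mul_div, div_le_iff₀ (by positivity)]
    gcongr
    simp
  -- summability of the coefficient norms over both indices
  have hsum := summable_norm_changeOriginSeries p hrad
  let c : ℕ → E → ℝ := fun k x => p.changeOrigin x k (fun _ => e)
  have hxr : ∀ᶠ x in 𝓝 (0 : E), ‖x‖₊ < r := by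
    have : Metric.ball (0 : E) r ∈ 𝓝 0 := Metric.ball_mem_nhds _ (by exact_mod_cast hr0)
    filter_upwards [this] with x hx
    rw [mem_ball_zero_iff] at hx
    exact_mod_cast hx
  -- the terms of the double series
  have hbound : ∀ (k l : ℕ) (x : E), ‖x‖₊ < r →
      ‖p.changeOriginSeries k l (fun _ => x)‖ ≤ ‖p.changeOriginSeries k l‖ * r ^ l := by
    intro k l x hx
    refine ((p.changeOriginSeries k l).le_opNorm _).trans ?_
    simp only [Finset.prod_const, Finset.card_univ, Fintype.card_fin]
    gcongr
    exact_mod_cast hx.le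
  have hck : ∀ (k : ℕ) (x : E), ‖x‖₊ < r →
      HasSum (fun l => p.changeOriginSeries k l (fun _ => x)) (p.changeOrigin x k) := by
    intro k x hx
    have h0 : 0 < p.radius := lt_of_le_of_lt (by simp) hrad
    have := (p.hasFPowerSeriesOnBall_changeOrigin k h0).hasSum (y := x) (by
      simp only [Metric.mem_eball, edist_zero_right]
      refine lt_of_le_of_lt ?_ hrad
      refine (le_trans ?_ (le_self_add (b := (r : ℝ≥0∞))))
      simpa [enorm] using hx.le)
    simpa using this
  have heval : ∀ (k : ℕ) (A : E [×k]→L[ℝ] ℝ), |A (fun _ => e)| ≤ ‖A‖ * ‖e‖ ^ k := by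
    intro k A
    have := A.le_opNorm (fun _ => e)
    simpa using this
  have hρe : ∀ k : ℕ, ‖e‖ ^ k * (ρ : ℝ) ^ k ≤ (r : ℝ) ^ k := by
    intro k
    rw [← mul_pow]
    have : ‖e‖ * (ρ : ℝ) ≤ r := by rw [mul_comm]; exact_mod_cast hρ
    gcongr
  refine ⟨c, ρ, by exact_mod_cast hρ0, ?_, ?_, ?_⟩
  · filter_upwards [hxr] with x hx t ht
    have hxt : (‖x‖₊ + ‖t • e‖₊ : ℝ≥0∞) < R := by
      have hte : ‖t • e‖₊ ≤ r := by
        rw [nnnorm_smul]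
        refine le_trans ?_ hρ
        gcongr
        rw [← NNReal.coe_le_coe]; simpa using ht.le
      have : (‖x‖₊ + ‖t • e‖₊ : ℝ≥0) ≤ r + r := by gcongr
      refine lt_of_le_of_lt ?_ hr
      exact_mod_cast this
    have hx2 : (‖x‖₊ : ℝ≥0∞) < R := lt_of_le_of_lt le_self_add hxt
    have h := (hp.changeOrigin (y := x) (by simpa using hx2)).hasSum (y := t • e) (by
      simp only [Metric.mem_eball, edist_zero_right]
      rw [lt_tsub_iff_left]
      exact hxt)
    rw [zero_add] at h
    have hfun : (fun k => c k x * t ^ k) = fun k => p.changeOrigin x k (fun _ => t • e) := by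
      funext k
      have := (p.changeOrigin x k).map_smul_univ (fun _ => t) (fun _ => e)
      simp only [Finset.prod_const, Finset.card_univ, Fintype.card_fin, smul_eq_mul] at this
      rw [this, mul_comm]
    rw [hfun]
    exact h
  · filter_upwards [hxr] with x hx
    have h1 : ∀ k, Summable fun l => ‖p.changeOriginSeries k l‖ * (r : ℝ) ^ l := by
      intro k
      have := hsum.prod_factor k
      exact (summable_mul_right_iff (a := (r : ℝ) ^ k) (by positivity)).1 this
    refine Summable.of_nonneg_of_le (fun k => by positivity) (fun k => ?_) hsum.prod
    change |c k x| * (ρ : ℝ) ^ k ≤ ∑' l, ‖p.changeOriginSeries k l‖ * (r : ℝ) ^ l * (r : ℝ) ^ k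
    rw [_root_.tsum_mul_right]
    calc |c k x| * (ρ : ℝ) ^ k ≤ (‖p.changeOrigin x k‖ * ‖e‖ ^ k) * ρ ^ k := by
          gcongr; exact heval k _
      _ ≤ ‖p.changeOrigin x k‖ * r ^ k := by
          rw [mul_assoc]; gcongr; exact hρe k
      _ ≤ _ := by
          gcongr
          exact (hck k x hx).tsum_eq ▸ tsum_of_norm_bounded (h1 k).hasSum (fun l => hbound k l x hx)
  · intro Y _ _ _ m hm
    let T : ∀ k : ℕ, (E [×k]→L[ℝ] ℝ) →L[ℝ] Y := fun k =>
      (ContinuousLinearMap.toSpanSingleton ℝ (m k)) ∘L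
        (ContinuousMultilinearMap.apply ℝ (fun _ : Fin k => E) ℝ (fun _ => e))
    have hTapp : ∀ k A, T k A = (A fun _ => e) • m k := by
      intro k A; simp [T]
    have hT : ∀ k A, ‖T k A‖ ≤ ‖A‖ * r ^ k := by
      intro k A
      rw [hTapp, norm_smul, Real.norm_eq_abs]
      calc |A fun _ => e| * ‖m k‖ ≤ (‖A‖ * ‖e‖ ^ k) * ρ ^ k := by
            gcongr
            · exact heval k A
            · exact hm k
        _ ≤ ‖A‖ * r ^ k := by rw [mul_assoc]; gcongr; exact hρe k
    have hTn : ∀ k, ‖T k‖ ≤ (r : ℝ) ^ k := fun k =>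
      ContinuousLinearMap.opNorm_le_bound _ (by positivity) (fun A => by
        rw [mul_comm]; exact hT k A)
    let Q : ℕ → ∀ l, E [×l]→L[ℝ] Y := fun k l =>
      (T k).compContinuousMultilinearMap (p.changeOriginSeries k l)
    have hQ : ∀ k l, ‖Q k l‖ ≤ ‖p.changeOriginSeries k l‖ * r ^ k := by
      intro k l
      refine ((T k).norm_compContinuousMultilinearMap_le _).trans ?_
      rw [mul_comm]
      gcongr
      exact hTn k
    have hsum' := (Equiv.prodComm ℕ ℕ).symm.summable_iff.2 hsum
    have h1 : ∀ l, Summable fun k => ‖p.changeOriginSeries k l‖ * (r : ℝ) ^ k := by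
      intro l
      have := hsum'.prod_factor l
      refine (summable_mul_right_iff (a := (r : ℝ) ^ l) (by positivity)).1 ?_
      refine this.congr (fun k => ?_)
      simp
      ring
    have hQs : ∀ l, Summable fun k => Q k l := fun l =>
      Summable.of_norm_bounded (h1 l) (fun k => hQ k l)
    let P : FormalMultilinearSeries ℝ E Y := fun l => ∑' k, Q k l
    have hPn : Summable fun l => ‖P l‖ * (r : ℝ) ^ l := by
      refine Summable.of_nonneg_of_le (fun l => by positivity) (fun l => ?_) hsum'.prod
      have : ‖P l‖ ≤ ∑' k, ‖p.changeOriginSeries k l‖ * (r : ℝ) ^ k :=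
        tsum_of_norm_bounded (h1 l).hasSum (fun k => hQ k l)
      calc ‖P l‖ * (r : ℝ) ^ l ≤ (∑' k, ‖p.changeOriginSeries k l‖ * (r : ℝ) ^ k) * r ^ l := by gcongr
        _ = _ := by
          rw [← _root_.tsum_mul_right]
          congr 1
          ext k
          simp
          ring
    have hP : HasFPowerSeriesOnBall (fun x => ∑' k, c k x • m k) P 0 r := by
      refine ⟨P.le_radius_of_summable_norm hPn, by exact_mod_cast hr0, ?_⟩
      intro x hx
      have hx : ‖x‖₊ < r := by
        have hx' : ‖x‖ < r := by simpa [enorm] using hx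
        exact_mod_cast hx'
      have hs2 : Summable fun kl : ℕ × ℕ => Q kl.1 kl.2 (fun _ => x) := by
        refine Summable.of_norm_bounded hsum (fun kl => ?_)
        refine (hT _ _).trans ?_
        gcongr
        exact hbound _ _ x hx
      have e1 : ∀ k, HasSum (fun l => Q k l (fun _ => x)) (c k x • m k) := by
        intro k
        have := (hck k x hx).mapL (T k)
        rw [hTapp] at this
        exact this
      have hs3 : Summable fun lk : ℕ × ℕ => Q lk.2 lk.1 (fun _ => x) :=
        (Equiv.prodComm ℕ ℕ).summable_iff.2 hs2
      have e2 : ∀ l, HasSum (fun k => Q k l (fun _ => x)) (P l (fun _ => x)) := by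
        intro l
        exact (hQs l).hasSum.mapL (ContinuousMultilinearMap.apply ℝ (fun _ : Fin l => E) Y (fun _ => x))
      have e3 := hs2.hasSum.prod_fiberwise e1
      have e4 := hs3.hasSum.prod_fiberwise e2
      simp only [zero_add]
      rw [e3.tsum_eq]
      convert e4 using 1
      exact ((Equiv.prodComm ℕ ℕ).tsum_eq (fun kl : ℕ × ℕ => Q kl.1 kl.2 (fun _ => x))).symm
    exact hP.analyticAt

end

/-! ### Weierstrass division -/

section

open Filter Topology NNReal ENNReal
open scoped BoundedContinuousFunction

/-- The space `ℓ^∞` of bounded sequences, with right shift `R`, left shift `S`, zeroth coordinate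
`δ` and zeroth unit vector `e0`. A sequence stands for the power series with these coefficients, so
that `R` is multiplication by the variable. -/
theorem exists_shift_operators :
    ∃ (X : Type) (_ : NormedAddCommGroup X) (_ : NormedSpace ℝ X) (_ : CompleteSpace X)
      (R S : X →L[ℝ] X) (δ : X →L[ℝ] ℝ) (e0 : X),
      ‖R‖ ≤ 1 ∧ ‖S‖ ≤ 1 ∧ S * R = 1 ∧ (∀ a, δ (R a) = 0) ∧ δ e0 = 1 ∧ S e0 = 0 := by
  let S : (ℕ →ᵇ ℝ) →L[ℝ] (ℕ →ᵇ ℝ) := LinearMap.mkContinuous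
    { toFun := fun a => a.compContinuous ⟨fun n => n + 1, continuous_of_discreteTopology⟩
      map_add' := fun a b => by ext n; simp
      map_smul' := fun s a => by ext n; simp } 1 (fun a => by
        rw [one_mul]
        exact (BoundedContinuousFunction.norm_le (norm_nonneg _)).2
          (fun n => a.norm_coe_le_norm (n + 1)))
  let Rf : (ℕ →ᵇ ℝ) → (ℕ →ᵇ ℝ) := fun a => BoundedContinuousFunction.ofNormedAddCommGroupDiscrete
    (fun n : ℕ => if n = 0 then 0 else a (n - 1)) ‖a‖ (fun n => by
      split_ifs
      · simp
      · exact a.norm_coe_le_norm _)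
  have hRf : ∀ a n, Rf a n = if n = 0 then 0 else a (n - 1) := fun a n => rfl
  let R : (ℕ →ᵇ ℝ) →L[ℝ] (ℕ →ᵇ ℝ) := LinearMap.mkContinuous
    { toFun := Rf
      map_add' := fun a b => by
        ext n
        simp only [hRf, BoundedContinuousFunction.coe_add, Pi.add_apply]
        split_ifs <;> simp
      map_smul' := fun s a => by
        ext n
        simp only [hRf, BoundedContinuousFunction.coe_smul]
        split_ifs <;> simp [*] } 1 (fun a => by
        rw [one_mul]
        refine (BoundedContinuousFunction.norm_le (norm_nonneg _)).2 (fun n => ?_)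
        change ‖Rf a n‖ ≤ _
        rw [hRf]
        split_ifs
        · simp
        · exact a.norm_coe_le_norm _)
  let δ : (ℕ →ᵇ ℝ) →L[ℝ] ℝ := BoundedContinuousFunction.evalCLM ℝ (0 : ℕ)
  let e0 : ℕ →ᵇ ℝ := BoundedContinuousFunction.ofNormedAddCommGroupDiscrete
    (fun n : ℕ => if n = 0 then 1 else 0) 1 (fun n => by split_ifs <;> simp)
  refine ⟨ℕ →ᵇ ℝ, inferInstance, inferInstance, inferInstance, R, S, δ, e0, ?_, ?_, ?_, ?_, ?_, ?_⟩
  · exact LinearMap.mkContinuous_norm_le _ zero_le_one _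
  · exact LinearMap.mkContinuous_norm_le _ zero_le_one _
  · ext a n
    change Rf a (n + 1) = a n
    simp [hRf]
  · intro a
    change Rf a 0 = 0
    simp [hRf]
  · change (if (0 : ℕ) = 0 then (1 : ℝ) else 0) = 1
    simp
  · ext n
    change (if (n + 1 : ℕ) = 0 then (1 : ℝ) else 0) = 0
    simp

theorem AnalyticAt.clm_apply' {E F G : Type*} [NormedAddCommGroup E] [NormedSpace ℝ E]
    [NormedAddCommGroup F] [NormedSpace ℝ F] [NormedAddCommGroup G] [NormedSpace ℝ G]
    {A : E → F →L[ℝ] G} {b : E → F} {x : E} (hA : AnalyticAt ℝ A x) (hb : AnalyticAt ℝ b x) :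
    AnalyticAt ℝ (fun y => A y (b y)) x :=
  ((ContinuousLinearMap.id ℝ (F →L[ℝ] G)).analyticAt_bilinear (A x, b x)).comp₂ hA hb

set_option maxHeartbeats 1000000 in
/-- **Weierstrass division.** If `h` does not vanish identically on the line `ℝ e`, every analytic `u`
is `q h` plus a polynomial in `ℓ` whose coefficients are analytic functions of the projection
`y - ℓ y • e`; the bound `d` on the degree is the order of vanishing of `h` on the line.

Along the lines parallel to `e`, after rescaling by a small `ρ`, functions become sequences of Taylor
coefficients in `ℓ^∞`, and multiplication by `h` becomes an operator `H x`. The quotient must solve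
`S ^ d (H x) Q = S ^ d (B x e0)`, where `B x e0` represents `u`, and `S ^ d (H x)` is invertible near
`x = 0` because at `x = 0` it is a small perturbation of a nonzero scalar. -/
theorem weierstrass_division {E : Type*} [NormedAddCommGroup E] [NormedSpace ℝ E]
    (e : E) (ℓ : E →L[ℝ] ℝ) {h : E → ℝ} (hh : AnalyticAt ℝ h 0)
    (hne : ¬ ∀ᶠ t : ℝ in 𝓝 0, h (t • e) = 0) :
    ∃ d : ℕ, ∀ u : E → ℝ, AnalyticAt ℝ u 0 →
      ∃ (q : E → ℝ) (r : ℕ → E → ℝ), AnalyticAt ℝ q 0 ∧ (∀ k, AnalyticAt ℝ (r k) 0) ∧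
      ∀ᶠ y in 𝓝 (0 : E), u y = q y * h y +
        ∑ k ∈ Finset.range d, r k (y - ℓ y • e) * ℓ y ^ k := by
  obtain ⟨X, _, _, _, R, S, δ, e0, hR, hS, hSR, hδR, hδe, hSe⟩ := exists_shift_operators
  obtain ⟨c, ρ₁, hρ₁, hc, hcs, hca⟩ := exists_slice_expansion e hh
  -- evaluation of a bounded sequence, seen as a power series
  let ev : ℝ → X →L[ℝ] ℝ := fun τ => δ ∘L Ring.inverse (1 - τ • S)
  have hunit : ∀ τ : ℝ, |τ| < 1 → IsUnit (1 - τ • S) := fun τ hτ =>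
    isUnit_one_sub_of_norm_lt_one (by
      rw [norm_smul, Real.norm_eq_abs]
      exact lt_of_le_of_lt (mul_le_of_le_one_right (abs_nonneg _) hS) hτ)
  have hev_an : AnalyticAt ℝ ev 0 := by
    have h1 : AnalyticAt ℝ (fun τ : ℝ => Ring.inverse (1 - τ • S)) 0 := by
      have h2 : AnalyticAt ℝ (fun τ : ℝ => 1 - τ • S) 0 := by fun_prop
      have h3 : AnalyticAt ℝ (Ring.inverse : (X →L[ℝ] X) → _) (1 - (0 : ℝ) • S) := by
        obtain ⟨v, hv⟩ := hunit 0 (by simp)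
        rw [← hv]
        exact analyticAt_inverse v
      exact AnalyticAt.comp (f := fun τ : ℝ => 1 - τ • S) h3 h2
    exact ((ContinuousLinearMap.compL ℝ X X ℝ δ).analyticAt _).comp h1
  have hev : ∀ τ : ℝ, |τ| < 1 → ∀ a, ev τ a = δ a + τ * ev τ (S a) := by
    intro τ hτ a
    have h1 := Ring.inverse_mul_cancel _ (hunit τ hτ)
    have h2 : ev τ ((1 - τ • S) a) = δ a := by
      change δ ((Ring.inverse (1 - τ • S) * (1 - τ • S)) a) = δ a
      rw [h1]; rfl
    have h3 : (1 - τ • S) a = a - τ • S a := rfl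
    rw [h3, map_sub, map_smul, smul_eq_mul] at h2
    linarith
  have hevR : ∀ τ : ℝ, |τ| < 1 → ∀ a, ev τ (R a) = τ * ev τ a := by
    intro τ hτ a
    have h1 : S (R a) = a := by
      change (S * R) a = a
      rw [hSR]; rfl
    rw [hev τ hτ, hδR, h1, zero_add]
  have hevRk : ∀ τ : ℝ, |τ| < 1 → ∀ (k : ℕ) a, ev τ ((R ^ k) a) = τ ^ k * ev τ a := by
    intro τ hτ k
    induction k with
    | zero => intro a; simp
    | succ k ih =>
      intro a
      have : (R ^ (k + 1)) a = R ((R ^ k) a) := by rw [pow_succ']; rfl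
      rw [this, hevR τ hτ, ih]; ring
  have hev0 : ∀ τ : ℝ, |τ| < 1 → ev τ e0 = 1 := by
    intro τ hτ
    rw [hev τ hτ, hδe, hSe]; simp
  have hevS : ∀ τ : ℝ, |τ| < 1 → ∀ (d : ℕ) a, ev τ a =
      ∑ k ∈ Finset.range d, τ ^ k * δ ((S ^ k) a) + τ ^ d * ev τ ((S ^ d) a) := by
    intro τ hτ d a
    induction d with
    | zero => simp
    | succ d ih =>
      have : (S ^ (d + 1)) a = S ((S ^ d) a) := by rw [pow_succ']; rfl
      rw [ih, Finset.sum_range_succ, hev τ hτ ((S ^ d) a), this]; ring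
  -- the order of vanishing of `h` along the line
  have hex : ∃ k, c k 0 ≠ 0 := by
    by_contra hcon
    push Not at hcon
    apply hne
    have : ∀ᶠ t : ℝ in 𝓝 0, |t| < ρ₁ := by
      have := Metric.ball_mem_nhds (0 : ℝ) hρ₁
      filter_upwards [this] with t ht
      simpa using ht
    filter_upwards [this] with t ht
    have h1 := hc.self_of_nhds t ht
    simp only [hcon, zero_mul, zero_add] at h1
    exact h1.unique hasSum_zero
  classical
  refine ⟨Nat.find hex, fun u hu => ?_⟩
  obtain ⟨b, ρ₂, hρ₂, hb, hbs, hba⟩ := exists_slice_expansion e hu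
  let d := Nat.find hex
  have hd : c d 0 ≠ 0 := Nat.find_spec hex
  have hlt : ∀ k < d, c k 0 = 0 := fun k hk => not_not.1 (Nat.find_min hex hk)
  have hSR' : ∀ k, S ^ d * R ^ (d + k) = R ^ k := by
    intro k
    have : S ^ d * R ^ d = 1 := by
      have : ∀ m : ℕ, S ^ m * R ^ m = 1 := by
        intro m
        induction m with
        | zero => simp
        | succ m ih =>
          rw [pow_succ S, pow_succ' R, mul_assoc, ← mul_assoc S R, hSR, one_mul, ih]
      exact this d
    rw [pow_add, ← mul_assoc, this, one_mul]
  have hpow : ∀ (T : X →L[ℝ] X), ‖T‖ ≤ 1 → ∀ k : ℕ, ‖T ^ k‖ ≤ 1 := by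
    intro T hT k
    induction k with
    | zero => rw [pow_zero]; exact ContinuousLinearMap.norm_id_le
    | succ k ih =>
      rw [pow_succ]
      exact (norm_mul_le _ _).trans (mul_le_one₀ ih (norm_nonneg _) hT)
  set C := ∑' k, |c k 0| * ρ₁ ^ k with hC
  have hC0 : 0 ≤ C := tsum_nonneg (fun k => by positivity)
  -- the scale `ρ` is small enough for the dominant coefficient to win
  obtain ⟨ρ, hρ, hρ1, hρ2, hρC⟩ : ∃ ρ : ℝ, 0 < ρ ∧ ρ ≤ ρ₁ ∧ ρ ≤ ρ₂ ∧
      ρ * C < |c d 0| * ρ₁ ^ (d + 1) := by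
    have hpos : 0 < |c d 0| * ρ₁ ^ (d + 1) := by positivity
    refine ⟨min (min ρ₁ ρ₂) (|c d 0| * ρ₁ ^ (d + 1) / (C + 1)), by positivity,
      (min_le_left _ _).trans (min_le_left _ _), (min_le_left _ _).trans (min_le_right _ _), ?_⟩
    calc _ ≤ (|c d 0| * ρ₁ ^ (d + 1) / (C + 1)) * C := by gcongr; exact min_le_right _ _
      _ = |c d 0| * ρ₁ ^ (d + 1) * (C / (C + 1)) := by ring
      _ < |c d 0| * ρ₁ ^ (d + 1) * 1 := by
        gcongr
        rw [div_lt_one (by positivity)]; linarith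
      _ = _ := mul_one _
  let m : ℕ → X →L[ℝ] X := fun k => ρ ^ k • R ^ k
  have hm : ∀ k, ‖m k‖ ≤ ρ ^ k := by
    intro k
    rw [norm_smul, norm_pow, Real.norm_of_nonneg hρ.le]
    exact mul_le_of_le_one_right (by positivity) (hpow R hR k)
  let H : E → X →L[ℝ] X := fun x => ∑' k, c k x • m k
  let B : E → X →L[ℝ] X := fun x => ∑' k, b k x • m k
  have hH : AnalyticAt ℝ H 0 := hca _ m (fun k => (hm k).trans (by gcongr))
  have hB : AnalyticAt ℝ B 0 := hba _ m (fun k => (hm k).trans (by gcongr))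
  have hHs : ∀ᶠ x in 𝓝 (0 : E), HasSum (fun k => c k x • m k) (H x) := by
    filter_upwards [hcs] with x hx
    refine (Summable.of_norm_bounded hx (fun k => ?_)).hasSum
    rw [norm_smul, Real.norm_eq_abs]
    gcongr
    exact (hm k).trans (by gcongr)
  have hBs : ∀ᶠ x in 𝓝 (0 : E), HasSum (fun k => b k x • m k) (B x) := by
    filter_upwards [hbs] with x hx
    refine (Summable.of_norm_bounded hx (fun k => ?_)).hasSum
    rw [norm_smul, Real.norm_eq_abs]
    gcongr
    exact (hm k).trans (by gcongr)
  have hevsum : ∀ (τ : ℝ), |τ| < 1 → ∀ (γ : ℕ → ℝ) (T : X →L[ℝ] X) (s : ℝ),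
      HasSum (fun k => γ k • m k) T → HasSum (fun k => γ k * (ρ * τ) ^ k) s →
      ∀ a, ev τ (T a) = s * ev τ a := by
    intro τ hτ γ T s h1 h2 a
    have h3 := h1.mapL ((ev τ) ∘L (ContinuousLinearMap.apply ℝ X a))
    have h4 := h2.mul_right (ev τ a)
    refine h3.unique (h4.congr_fun ?_)
    intro k
    change ev τ (γ k • (ρ ^ k • (R ^ k) a)) = _
    rw [map_smul, map_smul, hevRk τ hτ, mul_pow, smul_eq_mul, smul_eq_mul]
    ring
  -- dropping the first `d` coefficients of `H x` leaves an invertible operator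
  let Λ : E → X →L[ℝ] X := fun x => S ^ d * H x
  have hΛ : AnalyticAt ℝ Λ 0 := analyticAt_const.mul hH
  have hΛ0 : IsUnit (Λ 0) := by
    have h1 := hHs.self_of_nhds.mul_left (S ^ d)
    have h2 : HasSum (fun k => if k = d then (c d 0 * ρ ^ d) • (1 : X →L[ℝ] X) else 0)
        ((c d 0 * ρ ^ d) • (1 : X →L[ℝ] X)) := hasSum_ite_eq d _
    have h3 := h1.sub h2
    have h4 : ‖Λ 0 - (c d 0 * ρ ^ d) • (1 : X →L[ℝ] X)‖ ≤ C * (ρ / ρ₁) ^ (d + 1) := by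
      have h5 := (hcs.self_of_nhds.hasSum.mul_right ((ρ / ρ₁) ^ (d + 1)))
      refine h3.tsum_eq ▸ tsum_of_norm_bounded h5 (fun k => ?_)
      rcases lt_trichotomy k d with hk | rfl | hk
      · rw [hlt k hk, if_neg hk.ne]
        simp
      · rw [if_pos rfl]
        have : S ^ d * (c d 0 • m d) = (c d 0 * ρ ^ d) • (1 : X →L[ℝ] X) := by
          have := hSR' 0
          simp only [add_zero, pow_zero] at this
          simp only [m]
          rw [mul_smul_comm, mul_smul_comm, this, smul_smul]
        rw [this, sub_self, norm_zero]
        positivity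
      · rw [if_neg hk.ne', sub_zero, mul_smul_comm, norm_smul, Real.norm_eq_abs, mul_assoc]
        gcongr
        calc ‖S ^ d * m k‖ ≤ ‖S ^ d‖ * ‖m k‖ := norm_mul_le _ _
          _ ≤ 1 * ρ ^ k := by gcongr; exacts [hpow S hS d, hm k]
          _ = ρ₁ ^ k * (ρ / ρ₁) ^ k := by rw [← mul_pow, mul_div_cancel₀ _ hρ₁.ne', one_mul]
          _ ≤ ρ₁ ^ k * (ρ / ρ₁) ^ (d + 1) := by
            gcongr ρ₁ ^ k * ?_
            exact pow_le_pow_of_le_one (by positivity) ((div_le_one hρ₁).2 hρ1) hk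
    set s := c d 0 * ρ ^ d with hs
    have hs0 : s ≠ 0 := mul_ne_zero hd (by positivity)
    have h6 : C * (ρ / ρ₁) ^ (d + 1) < |s| := by
      rw [hs, abs_mul, abs_of_pos (pow_pos hρ d), div_pow, ← mul_div_assoc,
        div_lt_iff₀ (by positivity)]
      calc C * ρ ^ (d + 1) = (ρ * C) * ρ ^ d := by ring
        _ < (|c d 0| * ρ₁ ^ (d + 1)) * ρ ^ d := by gcongr
        _ = _ := by ring
    have h7 : IsUnit (1 - (1 - s⁻¹ • Λ 0)) := by
      apply isUnit_one_sub_of_norm_lt_one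
      have : 1 - s⁻¹ • Λ 0 = -(s⁻¹ • (Λ 0 - s • (1 : X →L[ℝ] X))) := by
        rw [smul_sub, smul_smul, inv_mul_cancel₀ hs0, one_smul]; abel
      rw [this, norm_neg, norm_smul, norm_inv, Real.norm_eq_abs, inv_mul_lt_iff₀ (by positivity),
        mul_one]
      exact lt_of_le_of_lt h4 h6
    have h8 : Λ 0 = (Units.mk0 s hs0) • (1 - (1 - s⁻¹ • Λ 0)) := by
      rw [Units.smul_def]
      simp [smul_smul, hs0]
    rw [h8]
    exact (isUnit_smul_iff _ _).2 h7
  have hΛe : ∀ᶠ x in 𝓝 (0 : E), IsUnit (Λ x) :=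
    hΛ.continuousAt.eventually (Units.isOpen.mem_nhds hΛ0)
  let Q : E → X := fun x => Ring.inverse (Λ x) ((S ^ d) (B x e0))
  have hBe : AnalyticAt ℝ (fun x => B x e0) 0 := hB.clm_apply' analyticAt_const
  have hQ : AnalyticAt ℝ Q 0 := by
    refine AnalyticAt.clm_apply' ?_ ?_
    · obtain ⟨v, hv⟩ := hΛ0
      have := analyticAt_inverse (𝕜 := ℝ) v
      rw [hv] at this
      exact this.comp hΛ
    · exact ((S ^ d).analyticAt _).comp hBe
  -- the remainder: a sequence supported on the first `d` coordinates
  let w : E → X := fun x => B x e0 - H x (Q x)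
  have hw : AnalyticAt ℝ w 0 := hBe.sub (hH.clm_apply' hQ)
  have hwS : ∀ᶠ x in 𝓝 (0 : E), (S ^ d) (w x) = 0 := by
    filter_upwards [hΛe] with x hx
    have h1 := Ring.mul_inverse_cancel _ hx
    have h2 : (S ^ d) (H x (Q x)) = (S ^ d) (B x e0) := by
      change (Λ x * Ring.inverse (Λ x)) ((S ^ d) (B x e0)) = _
      rw [h1]; rfl
    change (S ^ d) (B x e0 - H x (Q x)) = 0
    rw [map_sub, h2, sub_self]
  let π : E → E := fun y => y - ℓ y • e
  have hπ : AnalyticAt ℝ π 0 :=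
    analyticAt_id.sub ((ℓ.analyticAt 0).smul analyticAt_const)
  have hπ0 : π 0 = 0 := by simp [π]
  have hπt : Tendsto π (𝓝 0) (𝓝 0) := by
    have := hπ.continuousAt.tendsto
    rwa [hπ0] at this
  refine ⟨fun y => ev (ρ⁻¹ * ℓ y) (Q (π y)), fun k x => (ρ⁻¹) ^ k * δ ((S ^ k) (w x)), ?_, ?_, ?_⟩
  · refine AnalyticAt.clm_apply' ?_ ?_
    · refine AnalyticAt.comp (g := ev) ?_ (analyticAt_const.mul (ℓ.analyticAt 0))
      simpa using hev_an
    · refine AnalyticAt.comp (g := Q) ?_ hπ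
      rwa [hπ0]
  · intro k
    exact analyticAt_const.mul (((δ ∘L (S ^ k)).analyticAt _).comp hw)
  · have hsmall : ∀ᶠ y in 𝓝 (0 : E), |ρ⁻¹ * ℓ y| < 1 := by
      have : ContinuousAt (fun y => |ρ⁻¹ * ℓ y|) 0 := by fun_prop
      exact this.eventually (Iio_mem_nhds (by simp))
    filter_upwards [hsmall, hπt.eventually hc, hπt.eventually hb, hπt.eventually hHs,
      hπt.eventually hBs, hπt.eventually hwS] with y hy hcy hby hHy hBy hwy
    set τ := ρ⁻¹ * ℓ y with hτ
    have hρτ : ρ * τ = ℓ y := by rw [hτ, ← mul_assoc, mul_inv_cancel₀ hρ.ne', one_mul]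
    have hℓ : |ℓ y| < ρ := by
      rw [← hρτ, abs_mul, abs_of_pos hρ]
      exact mul_lt_of_lt_one_right hρ hy
    have hyy : π y + ℓ y • e = y := by simp [π]
    have h1 := hcy (ℓ y) (hℓ.trans_le hρ1)
    have h2 := hby (ℓ y) (hℓ.trans_le hρ2)
    rw [hyy, ← hρτ] at h1 h2
    have h3 := hevsum τ hy _ _ _ hHy h1 (Q (π y))
    have h4 := hevsum τ hy _ _ _ hBy h2 e0
    rw [hev0 τ hy, mul_one] at h4
    have h5 := hevS τ hy d (w (π y))
    rw [hwy, map_zero, mul_zero, add_zero] at h5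
    have h6 : ev τ (w (π y)) = ev τ (B (π y) e0) - ev τ (H (π y) (Q (π y))) := map_sub _ _ _
    rw [h3, h4, h5] at h6
    rw [mul_comm (ev τ (Q (π y)))]
    rw [eq_comm, sub_eq_iff_eq_add] at h6
    rw [h6, add_comm]
    congr 1
    refine Finset.sum_congr rfl (fun k _ => ?_)
    rw [hτ, mul_pow]
    ring

end

/-! ### Two facts on analytic germs -/

section

open Filter Topology

/-- Two analytic functions with the same logarithmic differential, `w du = u dw`, are proportional: the
quotient is constant near a point where `w ≠ 0`, and the identity theorem spreads the relation. -/
theorem exists_eventually_eq_const_mul {E : Type*} [NormedAddCommGroup E] [NormedSpace ℝ E]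
    [FiniteDimensional ℝ E] {u w : E → ℝ} (hu : AnalyticAt ℝ u 0) (hw : AnalyticAt ℝ w 0)
    (hw0 : ¬ ∀ᶠ x in 𝓝 (0 : E), w x = 0)
    (h : ∀ v : E, ∀ᶠ x in 𝓝 (0 : E), w x * fderiv ℝ u x v = u x * fderiv ℝ w x v) :
    ∃ c : ℝ, ∀ᶠ x in 𝓝 (0 : E), u x = c * w x := by
  let b := Module.finBasis ℝ E
  have h1 : ∀ᶠ x in 𝓝 (0 : E), w x • fderiv ℝ u x = u x • fderiv ℝ w x := by
    have : ∀ᶠ x in 𝓝 (0 : E), ∀ i, w x * fderiv ℝ u x (b i) = u x * fderiv ℝ w x (b i) :=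
      eventually_all.2 fun i => h (b i)
    filter_upwards [this] with x hx
    have h2 : (w x • fderiv ℝ u x).toLinearMap = (u x • fderiv ℝ w x).toLinearMap :=
      b.ext (fun i => by simpa using hx i)
    exact ContinuousLinearMap.coe_injective h2
  obtain ⟨r, hr, hball⟩ := Metric.eventually_nhds_iff_ball.1
    ((h1.and hu.eventually_analyticAt).and hw.eventually_analyticAt)
  have hB : ∀ᶠ x in 𝓝 (0 : E), x ∈ Metric.ball (0 : E) r := Metric.ball_mem_nhds _ hr
  obtain ⟨x0, hx0w, hx0⟩ := ((not_eventually.1 hw0).and_eventually hB).exists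
  refine ⟨u x0 / w x0, ?_⟩
  have hww : ∀ᶠ x in 𝓝 x0, w x ≠ 0 ∧ x ∈ Metric.ball (0 : E) r :=
    ((hball x0 hx0).2.continuousAt.eventually_ne hx0w).and (Metric.isOpen_ball.mem_nhds hx0)
  obtain ⟨s, hs, hsb⟩ := Metric.eventually_nhds_iff_ball.1 hww
  have hconst : ∀ x ∈ Metric.ball x0 s, u x / w x = u x0 / w x0 := by
    have hd : ∀ x ∈ Metric.ball x0 s, HasFDerivAt (fun x => u x * (w x)⁻¹) (0 : E →L[ℝ] ℝ) x := by
      intro x hx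
      obtain ⟨⟨e1, e2⟩, e3⟩ := hball x (hsb x hx).2
      have d1 := e2.differentiableAt.hasFDerivAt
      have d2 := (hasDerivAt_inv (hsb x hx).1).comp_hasFDerivAt x e3.differentiableAt.hasFDerivAt
      have d3 := d1.mul d2
      refine d3.congr_fderiv ?_
      have hne := (hsb x hx).1
      ext v
      have e4 : w x * fderiv ℝ u x v = u x * fderiv ℝ w x v := by
        simpa using DFunLike.congr_fun e1 v
      simp
      field_simp
      linarith
    intro x hx
    have := (convex_ball x0 s).is_const_of_fderivWithin_eq_zero (𝕜 := ℝ)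
      (f := fun x => u x * (w x)⁻¹) (fun x hx => (hd x hx).differentiableAt.differentiableWithinAt)
      (fun x hx => by
        rw [fderivWithin_of_isOpen Metric.isOpen_ball hx]; exact (hd x hx).fderiv)
      hx (Metric.mem_ball_self hs)
    simpa [div_eq_mul_inv] using this
  have hE : Set.EqOn u (fun x => u x0 / w x0 * w x) (Metric.ball 0 r) := by
    refine AnalyticOnNhd.eqOn_of_preconnected_of_eventuallyEq (𝕜 := ℝ) (z₀ := x0)
      (fun x hx => (hball x hx).1.2) (fun x hx => analyticAt_const.mul (hball x hx).2)
      (convex_ball _ _).isPreconnected hx0 ?_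
    filter_upwards [Metric.ball_mem_nhds x0 hs] with x hx
    rw [← hconst x hx, div_mul_cancel₀ _ (hsb x hx).1]
  filter_upwards [hB] with x hx using hE hx

/-- Some line through `0` is not contained in the zero set of a nonzero analytic germ. -/
theorem exists_line_not_eventually_zero {E : Type*} [NormedAddCommGroup E] [NormedSpace ℝ E]
    {h : E → ℝ} (hh : AnalyticAt ℝ h 0) (hne : ¬ ∀ᶠ x in 𝓝 (0 : E), h x = 0) :
    ∃ e : E, ¬ ∀ᶠ t : ℝ in 𝓝 0, h (t • e) = 0 := by
  by_contra hcon
  push Not at hcon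
  apply hne
  obtain ⟨r, hr, hball⟩ := Metric.eventually_nhds_iff_ball.1 hh.eventually_analyticAt
  filter_upwards [Metric.ball_mem_nhds (0 : E) hr] with x hx
  let ψ : ℝ →L[ℝ] E := ContinuousLinearMap.toSpanSingleton ℝ x
  have hψ : ∀ t, ψ t = t • x := fun t => by simp [ψ]
  have hconv : Convex ℝ (ψ ⁻¹' Metric.ball 0 r) := (convex_ball _ _).linear_preimage ψ.toLinearMap
  have hE : Set.EqOn (h ∘ ψ) 0 (ψ ⁻¹' Metric.ball 0 r) := by
    refine AnalyticOnNhd.eqOn_of_preconnected_of_eventuallyEq (𝕜 := ℝ) (z₀ := 0)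
      (fun t ht => (hball _ ht).comp (ψ.analyticAt t)) (fun t ht => analyticAt_const)
      hconv.isPreconnected (by simp [hr]) ?_
    filter_upwards [hcon x] with t ht
    simpa [hψ] using ht
  have := hE (x := 1) (by simpa [hψ] using hx)
  simpa [hψ] using this

end

/-! ### Derivations as tangent vectors at generalised points -/

section

open Filter Topology

section Germs

set_option linter.unusedSectionVars false

variable {ι L : Type} [Field L] [Algebra ℝ L] {l : Filter ι} (Φ : (ι → ℝ) →ₐ[ℝ] L)
  {E : Type} [NormedAddCommGroup E] [NormedSpace ℝ E]

/-- `Φ` depends only on the germ of a function along the filter `l`. -/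
def FactorsThroughGerms (l : Filter ι) (Φ : (ι → ℝ) →ₐ[ℝ] L) : Prop :=
  ∀ g₁ g₂ : ι → ℝ, g₁ =ᶠ[l] g₂ → Φ g₁ = Φ g₂

/-- The value of `h` at the `L`-valued point `ξ`: the class under `Φ` of the family `i ↦ h (ξ i)`.
When `Φ` factors through germs along `l` and `ξ` tends to `0` along `l`, it depends only on the germ
of `h` at `0`. -/
def gval (ξ : ι → E) (h : E → ℝ) : L := Φ (fun i => h (ξ i))

variable {Φ}

theorem gval_congr (hΦ : FactorsThroughGerms l Φ) {ξ : ι → E} (hξ : Tendsto ξ l (𝓝 0))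
    {g g' : E → ℝ} (h : ∀ᶠ x in 𝓝 (0 : E), g x = g' x) : gval Φ ξ g = gval Φ ξ g' :=
  hΦ _ _ (hξ.eventually h)

theorem gval_add (ξ : ι → E) (g g' : E → ℝ) :
    gval Φ ξ (fun x => g x + g' x) = gval Φ ξ g + gval Φ ξ g' :=
  map_add Φ (fun i => g (ξ i)) (fun i => g' (ξ i))

theorem gval_sub (ξ : ι → E) (g g' : E → ℝ) :
    gval Φ ξ (fun x => g x - g' x) = gval Φ ξ g - gval Φ ξ g' :=
  map_sub Φ (fun i => g (ξ i)) (fun i => g' (ξ i))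

theorem gval_mul (ξ : ι → E) (g g' : E → ℝ) :
    gval Φ ξ (fun x => g x * g' x) = gval Φ ξ g * gval Φ ξ g' :=
  map_mul Φ (fun i => g (ξ i)) (fun i => g' (ξ i))

theorem gval_const (ξ : ι → E) (c : ℝ) :
    gval Φ ξ (fun _ => c) = algebraMap ℝ L c :=
  Φ.commutes c

theorem gval_const_mul (ξ : ι → E) (c : ℝ) (g : E → ℝ) :
    gval Φ ξ (fun x => c * g x) = algebraMap ℝ L c * gval Φ ξ g := by
  rw [gval_mul, gval_const]

theorem gval_ne_zero (hΦ : FactorsThroughGerms l Φ) {ξ : ι → E} {g : E → ℝ}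
    (h : ∀ᶠ i in l, g (ξ i) ≠ 0) : gval Φ ξ g ≠ 0 := by
  intro h0
  have h1 : gval Φ ξ (fun x => g x * (g x)⁻¹) = 1 := by
    have := hΦ (fun i => g (ξ i) * (g (ξ i))⁻¹) 1 (by
      filter_upwards [h] with i hi
      simp [hi])
    rw [map_one] at this
    exact this
  rw [gval_mul, h0, zero_mul] at h1
  exact zero_ne_one h1

theorem gval_fderiv_congr (hΦ : FactorsThroughGerms l Φ) {ξ : ι → E} (hξ : Tendsto ξ l (𝓝 0))
    {g g' : E → ℝ} (h : ∀ᶠ x in 𝓝 (0 : E), g x = g' x) (v : E) :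
    gval Φ ξ (fun x => fderiv ℝ g x v) = gval Φ ξ (fun x => fderiv ℝ g' x v) := by
  refine gval_congr hΦ hξ ?_
  filter_upwards [h.eventually_nhds] with x hx
  rw [Filter.EventuallyEq.fderiv_eq hx]

theorem gval_fderiv_add (hΦ : FactorsThroughGerms l Φ) {ξ : ι → E} (hξ : Tendsto ξ l (𝓝 0))
    {g g' : E → ℝ} (hg : AnalyticAt ℝ g 0) (hg' : AnalyticAt ℝ g' 0) (v : E) :
    gval Φ ξ (fun x => fderiv ℝ (fun x => g x + g' x) x v) =
      gval Φ ξ (fun x => fderiv ℝ g x v) + gval Φ ξ (fun x => fderiv ℝ g' x v) := by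
  rw [← gval_add]
  refine gval_congr hΦ hξ ?_
  filter_upwards [hg.eventually_analyticAt, hg'.eventually_analyticAt] with x h1 h2
  rw [fderiv_fun_add h1.differentiableAt h2.differentiableAt]
  rfl

theorem gval_fderiv_mul (hΦ : FactorsThroughGerms l Φ) {ξ : ι → E} (hξ : Tendsto ξ l (𝓝 0))
    {g g' : E → ℝ} (hg : AnalyticAt ℝ g 0) (hg' : AnalyticAt ℝ g' 0) (v : E) :
    gval Φ ξ (fun x => fderiv ℝ (fun x => g x * g' x) x v) =
      gval Φ ξ g * gval Φ ξ (fun x => fderiv ℝ g' x v) +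
        gval Φ ξ g' * gval Φ ξ (fun x => fderiv ℝ g x v) := by
  rw [← gval_mul, ← gval_mul, ← gval_add]
  refine gval_congr hΦ hξ ?_
  filter_upwards [hg.eventually_analyticAt, hg'.eventually_analyticAt] with x h1 h2
  rw [fderiv_fun_mul h1.differentiableAt h2.differentiableAt]
  simp

theorem AnalyticAt.fderiv_apply' [CompleteSpace E] {g : E → ℝ} {x : E}
    (hg : AnalyticAt ℝ g x) (v : E) : AnalyticAt ℝ (fun x => fderiv ℝ g x v) x :=
  hg.fderiv.clm_apply' analyticAt_const

/-- The derivation `D` of `L` acts on the values at `ξ` of analytic functions as a tangent vector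
`∑ c i ∂_{v i}` with coefficients `c i` in `L`, that is, it obeys the chain rule for analytic
functions and not only for polynomials. -/
def IsVectorAt (Φ : (ι → ℝ) →ₐ[ℝ] L) (ξ : ι → E) (D : Derivation ℝ L L) : Prop :=
  ∃ (κ : Type) (_ : Fintype κ) (v : κ → E) (c : κ → L), ∀ g : E → ℝ, AnalyticAt ℝ g 0 →
    D (gval Φ ξ g) = ∑ i, c i * gval Φ ξ (fun x => fderiv ℝ g x (v i))

/-- Case of a point `ξ` satisfying no analytic relation. The directional derivatives then act on the
algebra of values, and extend to derivations `D v` of `L`. If all of them kill `y`, either `y` is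
transcendental over the field `K` of values, and a `K`-derivation of `L` is nonzero on `y`, or the
coefficients of the minimal polynomial of `y` over `K` are killed by all `D v`; being quotients of
analytic functions, they are then real constants, so that `y` would be algebraic over `ℝ`. -/
theorem exists_vector_of_independent [FiniteDimensional ℝ E] (hΦ : FactorsThroughGerms l Φ)
    {ξ : ι → E} (hξ : Tendsto ξ l (𝓝 0))
    (hind : ∀ g : E → ℝ, AnalyticAt ℝ g 0 → gval Φ ξ g = 0 → ∀ᶠ x in 𝓝 (0 : E), g x = 0)
    {y : L} (hy : Transcendental ℝ y) :
    ∃ D : Derivation ℝ L L, D y ≠ 0 ∧ IsVectorAt Φ ξ D := by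
  have : CharZero L := charZero_of_injective_algebraMap (algebraMap ℝ L).injective
  have : CompleteSpace E := FiniteDimensional.complete ℝ E
  -- the algebra of values of analytic functions
  let A : Subalgebra ℝ L :=
    { carrier := {a | ∃ g : E → ℝ, AnalyticAt ℝ g 0 ∧ gval Φ ξ g = a}
      mul_mem' := by
        rintro _ _ ⟨g, hg, rfl⟩ ⟨g', hg', rfl⟩
        exact ⟨_, hg.mul hg', gval_mul ξ g g'⟩
      add_mem' := by
        rintro _ _ ⟨g, hg, rfl⟩ ⟨g', hg', rfl⟩
        exact ⟨_, hg.add hg', gval_add ξ g g'⟩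
      algebraMap_mem' := fun c => ⟨_, analyticAt_const, gval_const ξ c⟩ }
  have hA : ∀ g : E → ℝ, AnalyticAt ℝ g 0 → gval Φ ξ g ∈ A := fun g hg => ⟨g, hg, rfl⟩
  -- each directional derivative extends to `L`
  have hD : ∀ v : E, ∃ D : Derivation ℝ L L, ∀ g : E → ℝ, AnalyticAt ℝ g 0 →
      D (gval Φ ξ g) = gval Φ ξ (fun x => fderiv ℝ g x v) := by
    intro v
    choose rep hrep hrepv using fun a : A => a.2
    have hwd : ∀ (a : A) (g : E → ℝ), AnalyticAt ℝ g 0 → gval Φ ξ g = a →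
        gval Φ ξ (fun x => fderiv ℝ (rep a) x v) = gval Φ ξ (fun x => fderiv ℝ g x v) := by
      intro a g hg hga
      refine gval_fderiv_congr hΦ hξ ?_ v
      filter_upwards [hind _ ((hrep a).sub hg) (by
        have := gval_sub (Φ := Φ) ξ (rep a) g
        rw [hrepv a, hga, sub_self] at this
        exact this)] with x hx
      exact sub_eq_zero.1 hx
    let δ₀ : A →ₗ[ℝ] L :=
      { toFun := fun a => gval Φ ξ (fun x => fderiv ℝ (rep a) x v)
        map_add' := fun a b => by
          rw [hwd (a + b) (fun x => rep a x + rep b x) ((hrep a).add (hrep b))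
            (by rw [gval_add, hrepv, hrepv]; rfl), gval_fderiv_add hΦ hξ (hrep a) (hrep b)]
        map_smul' := fun s a => by
          rw [hwd (s • a) (fun x => s * rep a x) (analyticAt_const.mul (hrep a))
            (by rw [gval_const_mul, hrepv, ← Algebra.smul_def]; rfl),
            gval_fderiv_mul hΦ hξ analyticAt_const (hrep a)]
          simp only [fderiv_fun_const]
          rw [gval_const, RingHom.id_apply, Algebra.smul_def]
          have : gval Φ ξ (fun x => ((0 : E → E →L[ℝ] ℝ) x) v) = algebraMap ℝ L 0 :=
            gval_const ξ 0
          rw [this]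
          simp }
    let δ : Derivation ℝ A L := Derivation.mk' δ₀ (fun a b => by
      change gval Φ ξ (fun x => fderiv ℝ (rep (a * b)) x v) = _
      rw [hwd (a * b) (fun x => rep a x * rep b x) ((hrep a).mul (hrep b))
            (by rw [gval_mul, hrepv, hrepv]; rfl), gval_fderiv_mul hΦ hξ (hrep a) (hrep b),
            hrepv, hrepv]
      rfl)
    obtain ⟨D, hD⟩ := exists_derivation_extension ℝ (A := A) (L := L) Subtype.val_injective δ
    refine ⟨D, fun g hg => ?_⟩
    have h1 := hD ⟨_, hA g hg⟩
    refine h1.trans ?_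
    exact hwd ⟨_, hA g hg⟩ g hg rfl
  choose D hD using hD
  by_cases hyv : ∃ v, D v y ≠ 0
  · obtain ⟨v, hv⟩ := hyv
    exact ⟨D v, hv, Unit, inferInstance, fun _ => v, fun _ => 1, fun g hg => by simp [hD v g hg]⟩
  push Not at hyv
  let K : IntermediateField ℝ L := IntermediateField.adjoin ℝ (A : Set L)
  have hAK : ∀ a ∈ A, a ∈ K := fun a ha => IntermediateField.subset_adjoin ℝ _ ha
  have hK : ∀ a ∈ K, ∃ u w : E → ℝ, AnalyticAt ℝ u 0 ∧ AnalyticAt ℝ w 0 ∧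
      a = gval Φ ξ u / gval Φ ξ w := by
    intro a ha
    obtain ⟨r, hr, s, hs, rfl⟩ := IntermediateField.mem_adjoin_iff_div.1 ha
    rw [Algebra.adjoin_eq A] at hr hs
    obtain ⟨u, hu, rfl⟩ := hr
    obtain ⟨w, hw, rfl⟩ := hs
    exact ⟨u, w, hu, hw, rfl⟩
  by_cases htr : Transcendental K y
  · obtain ⟨D', hD'⟩ := exists_derivation_of_transcendental htr
    refine ⟨D'.restrictScalars ℝ, hD', PEmpty, inferInstance, PEmpty.elim, PEmpty.elim,
      fun g hg => ?_⟩
    have h1 := D'.map_algebraMap (⟨_, hAK _ (hA g hg)⟩ : K)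
    simpa using h1
  exfalso
  have hyK : IsIntegral K y := (not_not.1 htr : IsAlgebraic K y).isIntegral
  have hDK : ∀ v, ∀ a ∈ K, D v a ∈ K := by
    intro v a ha
    obtain ⟨u, w, hu, hw, rfl⟩ := hK a ha
    rw [Derivation.leibniz_div, hD v u hu, hD v w hw]
    have h1 := hAK _ (hA u hu)
    have h2 := hAK _ (hA w hw)
    have h3 := hAK _ (hA _ (hu.fderiv_apply' v))
    have h4 := hAK _ (hA _ (hw.fderiv_apply' v))
    exact K.mul_mem (pow_mem (K.inv_mem h2) 2) (K.sub_mem (K.mul_mem h2 h3) (K.mul_mem h1 h4))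
  -- constants of all the `D v` in `K` are real
  have hconst : ∀ a ∈ K, (∀ v, D v a = 0) → ∃ c : ℝ, algebraMap ℝ L c = a := by
    intro a ha hDa
    obtain ⟨u, w, hu, hw, rfl⟩ := hK a ha
    by_cases hw0 : gval Φ ξ w = 0
    · exact ⟨0, by simp [hw0]⟩
    obtain ⟨c, hc⟩ := exists_eventually_eq_const_mul hu hw
      (fun h0 => hw0 (by
        rw [gval_congr hΦ hξ h0, gval_const, map_zero])) (fun v => by
        have h1 := hDa v
        rw [Derivation.leibniz_div, hD v u hu, hD v w hw, smul_eq_zero] at h1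
        have h2 : gval Φ ξ w * gval Φ ξ (fun x => fderiv ℝ u x v) -
            gval Φ ξ u * gval Φ ξ (fun x => fderiv ℝ w x v) = 0 :=
          h1.resolve_left (pow_ne_zero _ (inv_ne_zero hw0))
        rw [← gval_mul, ← gval_mul, ← gval_sub] at h2
        filter_upwards [hind _ ((hw.mul (hu.fderiv_apply' v)).sub
          (hu.mul (hw.fderiv_apply' v))) h2] with x hx
        exact sub_eq_zero.1 hx)
    refine ⟨c, ?_⟩
    rw [gval_congr hΦ hξ hc, gval_const_mul, mul_div_cancel_right₀ _ hw0]
  -- the coefficients of the minimal polynomial of `y` are killed by all the `D v`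
  have hcoeff : ∀ v k, D v ((minpoly K y).coeff k : L) = 0 := by
    intro v
    have h1 : ∑ i ∈ Finset.range ((minpoly K y).natDegree + 1),
        D v ((minpoly K y).coeff i : L) * y ^ i = 0 := by
      have h2 := minpoly.aeval K y
      rw [Polynomial.aeval_eq_sum_range] at h2
      have h3 := congrArg (D v) h2
      rw [map_zero, map_sum] at h3
      rw [← h3]
      refine Finset.sum_congr rfl (fun i _ => ?_)
      have h4 : (minpoly K y).coeff i • y ^ i = ((minpoly K y).coeff i : L) * y ^ i := rfl
      rw [h4, Derivation.leibniz, Derivation.leibniz_pow, hyv v]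
      simp [mul_comm]
    let Q : Polynomial K := ∑ i ∈ Finset.range (minpoly K y).natDegree,
      Polynomial.monomial i ⟨D v ((minpoly K y).coeff i : L), hDK v _ ((minpoly K y).coeff i).2⟩
    have hlead : D v ((minpoly K y).coeff (minpoly K y).natDegree : L) = 0 := by
      have := minpoly.monic hyK
      rw [Polynomial.Monic, Polynomial.leadingCoeff] at this
      rw [this]
      simp
    have hQ : Polynomial.aeval y Q = 0 := by
      rw [Finset.sum_range_succ, hlead, zero_mul, add_zero] at h1
      rw [← h1, map_sum]
      refine Finset.sum_congr rfl (fun i _ => ?_)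
      rw [Polynomial.aeval_monomial]
      rfl
    have hQ0 : Q = 0 := by
      by_contra hne
      have h2 := minpoly.degree_le_of_ne_zero K y hne hQ
      have h3 : Q.degree < (minpoly K y).natDegree := by
        refine (Polynomial.degree_sum_le _ _).trans_lt ?_
        refine (Finset.sup_lt_iff (WithBot.bot_lt_coe _)).2 (fun i hi => ?_)
        refine (Polynomial.degree_monomial_le _ _).trans_lt ?_
        exact_mod_cast Finset.mem_range.1 hi
      rw [Polynomial.degree_eq_natDegree (minpoly.ne_zero hyK)] at h2
      exact absurd h2 (not_le.2 h3)
    intro k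
    rcases lt_trichotomy k (minpoly K y).natDegree with hk | hk | hk
    · have h2 := congrArg (fun P : Polynomial K => P.coeff k) hQ0
      simp only [Q, Polynomial.finsetSum_coeff, Polynomial.coeff_monomial,
        Polynomial.coeff_zero, Finset.sum_ite_eq', Finset.mem_range, hk, if_true] at h2
      exact congrArg Subtype.val h2
    · rw [hk]; exact hlead
    · rw [Polynomial.coeff_eq_zero_of_natDegree_lt hk]
      simp
  have hlift : minpoly K y ∈ Polynomial.lifts (algebraMap ℝ K) := by
    rw [Polynomial.lifts_iff_coeff_lifts]
    intro k
    obtain ⟨c, hc⟩ := hconst _ ((minpoly K y).coeff k).2 (fun v => hcoeff v k)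
    exact ⟨c, Subtype.ext hc⟩
  obtain ⟨P, hP⟩ := (Polynomial.mem_lifts _).1 hlift
  refine hy ⟨P, ?_, ?_⟩
  · rintro rfl
    exact minpoly.ne_zero hyK (by rw [← hP, Polynomial.map_zero])
  · rw [← Polynomial.aeval_map_algebraMap K, hP]
    exact minpoly.aeval K y

/-- Case of a point `ξ` satisfying an analytic relation `h`. If `D` is a tangent vector at the
projection of `ξ` to a hyperplane along a line on which `h` is not identically zero, it is one at `ξ`.
The defect `Δ` of the chain rule, with `D (ℓ ξ)` as component along `e`, is a derivation vanishing on
polynomials in `ℓ` with coefficients coming from the hyperplane. Weierstrass division by `h` provides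
such a polynomial `W` which is monic and vanishes at `ξ`, and division of any `g` by `W` gives
`Δ g = q Δ W + W(ξ) Δ q = 0`. -/
theorem isVectorAt_of_dependent (hΦ : FactorsThroughGerms l Φ)
    {ξ : ι → E} (hξ : Tendsto ξ l (𝓝 0)) {h : E → ℝ} (hh : AnalyticAt ℝ h 0)
    (hh0 : gval Φ ξ h = 0) {e : E} (he : ¬ ∀ᶠ t : ℝ in 𝓝 0, h (t • e) = 0)
    {ℓ : E →L[ℝ] ℝ} (hℓ : ℓ e = 1) (π : E →L[ℝ] ℓ.ker) (hπ : ∀ x, (π x : E) = x - ℓ x • e)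
    {D : Derivation ℝ L L} (hD : IsVectorAt Φ (fun i => π (ξ i)) D) : IsVectorAt Φ ξ D := by
  obtain ⟨κ, _, v, c, hc⟩ := hD
  have hπe : π e = 0 := Subtype.ext (by rw [hπ, hℓ]; simp)
  have hπv : ∀ z : ℓ.ker, π z = z := fun z => Subtype.ext (by
    rw [hπ]
    have : ℓ (z : E) = 0 := z.2
    simp [this])
  -- the defect of the chain rule
  let Δ : (E → ℝ) → L := fun g => D (gval Φ ξ g) -
    (D (gval Φ ξ ℓ) * gval Φ ξ (fun x => fderiv ℝ g x e) +
      ∑ i, c i * gval Φ ξ (fun x => fderiv ℝ g x (v i)))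
  suffices hΔ : ∀ g : E → ℝ, AnalyticAt ℝ g 0 → Δ g = 0 by
    refine ⟨Option κ, inferInstance, fun o => o.elim e (fun i => v i),
      fun o => o.elim (D (gval Φ ξ ℓ)) c, fun g hg => ?_⟩
    rw [Fintype.sum_option]
    exact sub_eq_zero.1 (hΔ g hg)
  have hΔcongr : ∀ g g' : E → ℝ, (∀ᶠ x in 𝓝 (0 : E), g x = g' x) → Δ g = Δ g' := by
    intro g g' hgg
    simp only [Δ, gval_congr hΦ hξ hgg, gval_fderiv_congr hΦ hξ hgg]
  have hΔadd : ∀ g g' : E → ℝ, AnalyticAt ℝ g 0 → AnalyticAt ℝ g' 0 →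
      Δ (fun x => g x + g' x) = Δ g + Δ g' := by
    intro g g' hg hg'
    simp only [Δ, gval_add, gval_fderiv_add hΦ hξ hg hg', map_add, mul_add,
      Finset.sum_add_distrib]
    ring
  have hΔmul : ∀ g g' : E → ℝ, AnalyticAt ℝ g 0 → AnalyticAt ℝ g' 0 →
      Δ (fun x => g x * g' x) = gval Φ ξ g * Δ g' + gval Φ ξ g' * Δ g := by
    intro g g' hg hg'
    have h1 : ∀ i, c i * (gval Φ ξ g * gval Φ ξ (fun x => fderiv ℝ g' x (v i)) +
        gval Φ ξ g' * gval Φ ξ (fun x => fderiv ℝ g x (v i))) =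
        gval Φ ξ g * (c i * gval Φ ξ (fun x => fderiv ℝ g' x (v i))) +
        gval Φ ξ g' * (c i * gval Φ ξ (fun x => fderiv ℝ g x (v i))) := fun i => by ring
    simp only [Δ, gval_mul, gval_fderiv_mul hΦ hξ hg hg', Derivation.leibniz, smul_eq_mul, h1,
      Finset.sum_add_distrib, ← Finset.mul_sum]
    ring
  have hξπ : Tendsto (fun i => π (ξ i)) l (𝓝 0) := by
    have := (π.continuous.tendsto 0).comp hξ
    rwa [map_zero] at this
  -- functions satisfying the chain rule
  have hΔπ : ∀ g : ℓ.ker → ℝ, AnalyticAt ℝ g 0 → Δ (fun x => g (π x)) = 0 := by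
    intro g hg
    have hfd : ∀ w : E, gval Φ ξ (fun x => fderiv ℝ (fun x => g (π x)) x w) =
        gval Φ (fun i => π (ξ i)) (fun z => fderiv ℝ g z (π w)) := by
      intro w
      refine gval_congr hΦ hξ (g' := fun x => fderiv ℝ g (π x) (π w)) ?_
      have : ∀ᶠ x in 𝓝 (0 : E), AnalyticAt ℝ g (π x) := by
        have h1 : Tendsto π (𝓝 0) (𝓝 0) := by
          have := π.continuous.tendsto 0
          rwa [map_zero] at this
        exact h1.eventually hg.eventually_analyticAt
      filter_upwards [this] with x hx
      have := (hx.differentiableAt.hasFDerivAt.comp x π.hasFDerivAt).fderiv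
      change fderiv ℝ (g ∘ π) x w = _
      rw [this]
      rfl
    have h1 : D (gval Φ ξ (fun x => g (π x))) = _ := hc g hg
    simp only [Δ, hfd, hπe, hπv, h1]
    have h2 : gval Φ (fun i => π (ξ i)) (fun z => fderiv ℝ g z 0) = 0 := by
      simp only [map_zero]
      rw [gval_const, map_zero]
    rw [h2]
    ring
  have hΔℓ : Δ ℓ = 0 := by
    have h1 : ∀ w : E, gval Φ ξ (fun x => fderiv ℝ ℓ x w) = algebraMap ℝ L (ℓ w) := by
      intro w
      simp only [ContinuousLinearMap.fderiv]
      rw [gval_const]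
    have h2 : ∀ i, ℓ (v i : E) = 0 := fun i => (v i).2
    simp only [Δ, h1, h2, hℓ]
    simp
  have hℓan : AnalyticAt ℝ ℓ 0 := ℓ.analyticAt 0
  have hℓpow : ∀ k : ℕ, AnalyticAt ℝ (fun x => ℓ x ^ k) 0 := fun k => hℓan.pow k
  have hΔℓpow : ∀ k : ℕ, Δ (fun x => ℓ x ^ k) = 0 := by
    intro k
    induction k with
    | zero =>
      have := hΔπ (fun _ => 1) analyticAt_const
      simpa using this
    | succ k ih =>
      simp only [pow_succ]
      rw [hΔmul _ _ (hℓpow k) hℓan, ih, hΔℓ]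
      simp
  have hr_an : ∀ r : E → ℝ, AnalyticAt ℝ r 0 → AnalyticAt ℝ (fun z : ℓ.ker => r z) 0 := by
    intro r hr
    have h1 : AnalyticAt ℝ r (ℓ.ker.subtypeL 0) := by simpa using hr
    exact h1.comp (ℓ.ker.subtypeL.analyticAt 0)
  have hrπ_an : ∀ r : E → ℝ, AnalyticAt ℝ r 0 → AnalyticAt ℝ (fun x => r (π x)) 0 := by
    intro r hr
    have h1 : AnalyticAt ℝ (fun z : ℓ.ker => r z) (π 0) := by simpa using hr_an r hr
    exact h1.comp (π.analyticAt 0)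
  have hpoly : ∀ (r : ℕ → E → ℝ), (∀ k, AnalyticAt ℝ (r k) 0) → ∀ d : ℕ,
      AnalyticAt ℝ (fun x => ∑ k ∈ Finset.range d, r k (π x) * ℓ x ^ k) 0 ∧
      Δ (fun x => ∑ k ∈ Finset.range d, r k (π x) * ℓ x ^ k) = 0 := by
    intro r hr d
    induction d with
    | zero =>
      have := hΔπ (fun _ => 0) analyticAt_const
      simpa using ⟨analyticAt_const, this⟩
    | succ d ih =>
      have h1 : AnalyticAt ℝ (fun x => r d (π x) * ℓ x ^ d) 0 :=
        (hrπ_an _ (hr d)).mul (hℓpow d)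
      simp only [Finset.sum_range_succ]
      refine ⟨ih.1.add h1, ?_⟩
      rw [hΔadd _ _ ih.1 h1, ih.2, hΔmul _ _ (hrπ_an _ (hr d)) (hℓpow d), hΔℓpow,
        hΔπ (fun z => r d z) (hr_an _ (hr d))]
      simp
  -- a Weierstrass polynomial vanishing at `ξ`
  obtain ⟨d, hdiv⟩ := weierstrass_division e ℓ hh he
  obtain ⟨q, r, hq, hr, hqr⟩ := hdiv (fun x => ℓ x ^ d) (hℓpow d)
  simp only [← hπ] at hqr
  let W : E → ℝ := fun x => ℓ x ^ d + ∑ k ∈ Finset.range d, (fun y => - r k y) (π x) * ℓ x ^ k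
  have hWp := hpoly (fun k y => - r k y) (fun k => (hr k).neg) d
  have hWan : AnalyticAt ℝ W 0 := (hℓpow d).add hWp.1
  have hΔW : Δ W = 0 := by
    rw [hΔadd _ _ (hℓpow d) hWp.1, hΔℓpow, hWp.2, add_zero]
  have hW0 : gval Φ ξ W = 0 := by
    rw [gval_congr hΦ hξ (g' := fun x => q x * h x), gval_mul, hh0, mul_zero]
    filter_upwards [hqr] with x hx
    simp only [W, neg_mul, Finset.sum_neg_distrib]
    linarith
  have hWe : ¬ ∀ᶠ t : ℝ in 𝓝 0, W (t • e) = 0 := by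
    intro hW
    let P : Polynomial ℝ := ∑ k ∈ Finset.range d, Polynomial.monomial k (r k 0)
    have hP : (Polynomial.X ^ d - P).Monic := by
      refine Polynomial.monic_X_pow_sub ?_
      refine (Polynomial.degree_sum_le _ _).trans_lt ?_
      refine (Finset.sup_lt_iff (WithBot.bot_lt_coe _)).2 (fun i hi => ?_)
      refine (Polynomial.degree_monomial_le _ _).trans_lt ?_
      exact_mod_cast Finset.mem_range.1 hi
    refine hP.ne_zero (Polynomial.eq_zero_of_infinite_isRoot _ ?_)
    refine infinite_of_mem_nhds (0 : ℝ) ?_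
    filter_upwards [hW] with t ht
    have h1 : W (t • e) = t ^ d - ∑ k ∈ Finset.range d, r k 0 * t ^ k := by
      simp [W, hπe, hℓ, sub_eq_add_neg]
    rw [h1] at ht
    simpa [P, Polynomial.eval_finsetSum, Polynomial.IsRoot] using ht
  obtain ⟨d', hdiv'⟩ := weierstrass_division e ℓ hWan hWe
  intro g hg
  obtain ⟨q', r', hq', hr', hqr'⟩ := hdiv' g hg
  simp only [← hπ] at hqr'
  have hp' := hpoly r' hr' d'
  rw [hΔcongr _ _ hqr', hΔadd (fun x => q' x * W x) _ (hq'.mul hWan) hp'.1, hp'.2,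
    hΔmul _ _ hq' hWan, hΔW, hW0]
  simp

/-- For every `y` transcendental over `ℝ` some derivation of `L` is nonzero on `y` and obeys the chain
rule for analytic functions at `ξ`. An analytic relation between the coordinates of `ξ` lowers the
dimension by one. -/
theorem exists_vector_of_transcendental (hΦ : FactorsThroughGerms l Φ) (m : ℕ) :
    ∀ (E : Type) [NormedAddCommGroup E] [NormedSpace ℝ E] [FiniteDimensional ℝ E],
      Module.finrank ℝ E = m → ∀ ξ : ι → E, Tendsto ξ l (𝓝 0) →
      ∀ y : L, Transcendental ℝ y → ∃ D : Derivation ℝ L L, D y ≠ 0 ∧ IsVectorAt Φ ξ D := by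
  induction m using Nat.strong_induction_on with
  | _ m ih =>
    intro E _ _ _ hm ξ hξ y hy
    by_cases hind : ∀ g : E → ℝ, AnalyticAt ℝ g 0 → gval Φ ξ g = 0 → ∀ᶠ x in 𝓝 (0 : E), g x = 0
    · exact exists_vector_of_independent hΦ hξ hind hy
    push Not at hind
    obtain ⟨h, hh, hh0, hne⟩ := hind
    obtain ⟨e, he⟩ := exists_line_not_eventually_zero hh (by simpa using hne)
    have hz : h 0 = 0 := by
      by_contra h0
      exact gval_ne_zero hΦ (hξ.eventually (hh.continuousAt.eventually_ne h0)) hh0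
    have he0 : e ≠ 0 := by
      rintro rfl
      exact he (by simp [hz])
    obtain ⟨ℓ, hℓ⟩ := SeparatingDual.exists_eq_one (R := ℝ) he0
    let π : E →L[ℝ] ℓ.ker := (ContinuousLinearMap.id ℝ E - ℓ.smulRight e).codRestrict ℓ.ker
      (fun x => by simp [hℓ])
    have hπ : ∀ x, (π x : E) = x - ℓ x • e := fun x => rfl
    have hlt : Module.finrank ℝ ℓ.ker < m := by
      rw [← hm]
      refine Submodule.finrank_lt (fun htop => ?_)
      have : e ∈ ℓ.ker := by rw [htop]; trivial
      have : ℓ e = 0 := this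
      rw [hℓ] at this
      exact one_ne_zero this
    have hξπ : Tendsto (fun i => π (ξ i)) l (𝓝 0) := by
      have := (π.continuous.tendsto 0).comp hξ
      rwa [map_zero] at this
    obtain ⟨D, hDy, hD⟩ := ih _ hlt ℓ.ker rfl _ hξπ y hy
    exact ⟨D, hDy, isVectorAt_of_dependent hΦ hξ hh hh0 he hℓ π hπ hD⟩

end Germs

end

/-! ### Transversality of small spheres to the zero set -/

section

open Filter Topology

/-- Small spheres are transverse to the zero set of `f`. This replaces the usual appeal to the curve
selection lemma. If bad points accumulate at `0`, take a residue field `L` of the ring of germs of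
functions along them. In `L` the class `y` of `‖x‖²` is nonzero and infinitesimal, hence transcendental
over `ℝ`, so some derivation `D` with `D y ≠ 0` acts as a tangent vector. At bad points `x` is a
combination `∑ a j ∇(f j)`, so `D y = 2 ∑ a j D (f j)`, which is `0` since `f = 0` there. -/
theorem eventually_transverse_spheres {E : Type} [NormedAddCommGroup E] [InnerProductSpace ℝ E]
    [FiniteDimensional ℝ E] {f : E → EuclideanSpace ℝ (Fin 2)} (hf : AnalyticAt ℝ f 0) :
    ∀ᶠ x in 𝓝[≠] (0 : E), f x = 0 → ∃ v, fderiv ℝ f x v = 0 ∧ inner ℝ x v ≠ 0 := by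
  by_contra hcon
  let bad : Set E := {x | f x = 0 ∧ ∀ v, fderiv ℝ f x v = 0 → inner ℝ x v = 0}
  let l : Filter E := 𝓝[≠] 0 ⊓ 𝓟 bad
  have hl : l.NeBot := by
    refine (inf_principal_neBot_iff).2 (fun s hs => ?_)
    rw [not_eventually] at hcon
    obtain ⟨x, hx, hxs⟩ := (hcon.and_eventually hs).exists
    push Not at hx
    exact ⟨x, hxs, hx⟩
  have hbad : ∀ᶠ x in l, x ∈ bad := mem_inf_of_right (mem_principal_self _)
  have hl0 : Tendsto (id : E → E) l (𝓝 0) := tendsto_id.mono_left (inf_le_left.trans inf_le_left)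
  have hne : ∀ᶠ x in l, x ≠ 0 := mem_inf_of_left self_mem_nhdsWithin
  -- the components of `f`
  let F : Fin 2 → E → ℝ := fun j x => f x j
  have hF : ∀ j, AnalyticAt ℝ (F j) 0 := fun j =>
    ((EuclideanSpace.proj (𝕜 := ℝ) j).analyticAt (f 0)).comp hf
  have hfan : ∀ᶠ x in l, AnalyticAt ℝ f x := hl0.eventually hf.eventually_analyticAt
  have hFd : ∀ x, AnalyticAt ℝ f x → ∀ j v, fderiv ℝ (F j) x v = fderiv ℝ f x v j := by
    intro x hx j v
    have h1 := ((EuclideanSpace.proj (𝕜 := ℝ) j).hasFDerivAt.comp x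
      hx.differentiableAt.hasFDerivAt).fderiv
    exact DFunLike.congr_fun h1 v
  -- Lagrange multipliers
  have hmult : ∀ x, ∃ a : Fin 2 → ℝ, x ∈ bad → AnalyticAt ℝ f x →
      ∀ v, inner ℝ x v = ∑ j, a j * fderiv ℝ (F j) x v := by
    intro x
    by_cases hx : x ∈ bad ∧ AnalyticAt ℝ f x
    swap
    · exact ⟨0, fun h1 h2 => absurd ⟨h1, h2⟩ hx⟩
    have hspan : ((innerSL ℝ x : E →L[ℝ] ℝ) : E →ₗ[ℝ] ℝ) ∈ Submodule.span ℝ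
        (Set.range fun j => ((fderiv ℝ (F j) x : E →L[ℝ] ℝ) : E →ₗ[ℝ] ℝ)) := by
      refine mem_span_of_iInf_ker_le_ker (fun v hv => ?_)
      rw [Submodule.mem_iInf] at hv
      have h1 : fderiv ℝ f x v = 0 := by
        ext j
        have := hv j
        rw [← hFd x hx.2 j v]
        simpa using this
      simpa using hx.1.2 v h1
    obtain ⟨a, ha⟩ := (Submodule.mem_span_range_iff_exists_fun ℝ).1 hspan
    refine ⟨a, fun _ _ v => ?_⟩
    have := DFunLike.congr_fun ha v
    simpa [eq_comm] using this
  choose a ha using hmult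
  -- a residue field of the ring of germs along `l`
  let I : Ideal (E → ℝ) :=
    { carrier := {g | ∀ᶠ x in l, g x = 0}
      add_mem' := fun {g g'} (hg : ∀ᶠ x in l, g x = 0) (hg' : ∀ᶠ x in l, g' x = 0) => by
        change ∀ᶠ x in l, (g + g') x = 0
        filter_upwards [hg, hg'] with x h1 h2
        simp [h1, h2]
      zero_mem' := by
        change ∀ᶠ x in l, (0 : E → ℝ) x = 0
        exact Eventually.of_forall fun _ => rfl
      smul_mem' := fun c g (hg : ∀ᶠ x in l, g x = 0) => by
        change ∀ᶠ x in l, (c • g) x = 0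
        filter_upwards [hg] with x h1
        simp [h1] }
  have hI : I ≠ ⊤ := by
    intro h
    have h1 : (1 : E → ℝ) ∈ I := by rw [h]; trivial
    obtain ⟨x, hx⟩ := Eventually.exists (f := l) h1
    exact one_ne_zero hx
  obtain ⟨M, hM, hIM⟩ := Ideal.exists_le_maximal I hI
  let _ : Field ((E → ℝ) ⧸ M) := Ideal.Quotient.field M
  let Φ : (E → ℝ) →ₐ[ℝ] (E → ℝ) ⧸ M := Ideal.Quotient.mkₐ ℝ M
  have hΦ : FactorsThroughGerms l Φ := by
    intro g g' hgg
    refine Ideal.Quotient.eq.2 (hIM ?_)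
    filter_upwards [hgg] with x hx
    simp [hx]
  let y := gval Φ id (fun x : E => ‖x‖ ^ 2)
  have hy0 : y ≠ 0 := gval_ne_zero hΦ (by
    filter_upwards [hne] with x hx
    simpa using hx)
  have hy : Transcendental ℝ y := by
    intro halg
    obtain ⟨p, hp0, hp⟩ := halg.exists_nonzero_coeff_and_aeval_eq_zero
      (mem_nonZeroDivisors_of_ne_zero hy0)
    have h1 : gval Φ id (fun x : E => p.eval (‖x‖ ^ 2)) = 0 := by
      rw [← hp]
      have h2 := Polynomial.aeval_algHom_apply Φ (fun x : E => ‖x‖ ^ 2) p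
      refine Eq.trans ?_ h2.symm
      change Φ _ = Φ _
      congr 1
      funext x
      change Polynomial.eval (‖x‖ ^ 2) p = _
      rw [← Polynomial.coe_aeval_eq_eval]
      exact (Polynomial.aeval_algHom_apply (Pi.evalAlgHom ℝ (fun _ : E => ℝ) x)
        (fun x : E => ‖x‖ ^ 2) p)
    refine gval_ne_zero hΦ (l := l) ?_ h1
    refine hl0.eventually (p := fun x => p.eval (‖x‖ ^ 2) ≠ 0) ?_
    have hcont : ContinuousAt (fun x : E => p.eval (‖x‖ ^ 2)) 0 := by
      have := p.continuous
      fun_prop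
    refine hcont.eventually_ne ?_
    simpa [← Polynomial.coeff_zero_eq_eval_zero] using hp0
  obtain ⟨D, hDy, κ, _, v, c, hc⟩ := exists_vector_of_transcendental hΦ _ E rfl id hl0 y hy
  apply hDy
  have hnorm : AnalyticAt ℝ (fun x : E => ‖x‖ ^ 2) 0 := by
    have h1 : AnalyticAt ℝ (fun x : E => inner ℝ x x) 0 :=
      AnalyticAt.clm_apply' ((innerSL ℝ (E := E)).analyticAt 0) analyticAt_id
    simpa only [real_inner_self_eq_norm_sq] using h1
  have hF0 : ∀ j, gval Φ id (F j) = 0 := by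
    intro j
    have := hΦ (F j) 0 (by
      filter_upwards [hbad] with x hx
      simp [F, hx.1])
    rw [map_zero] at this
    exact this
  have hgrad : ∀ w : E, gval Φ id (fun x : E => fderiv ℝ (fun x : E => ‖x‖ ^ 2) x w) =
      ∑ j, (2 * Φ (fun x => a x j)) * gval Φ id (fun x => fderiv ℝ (F j) x w) := by
    intro w
    have h1 := hΦ (fun x : E => fderiv ℝ (fun x : E => ‖x‖ ^ 2) x w)
      (∑ j, (2 * (fun x => a x j)) * (fun x => fderiv ℝ (F j) x w)) (by
        filter_upwards [hbad, hfan] with x hx hx2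
        have h2 : fderiv ℝ (fun x : E => ‖x‖ ^ 2) x w = 2 * inner ℝ x w := by
          rw [fderiv_norm_sq_apply]
          simp
        rw [h2, ha x hx hx2 w]
        simp [Fin.sum_univ_two]
        ring)
    refine Eq.trans h1 ?_
    rw [map_sum]
    refine Finset.sum_congr rfl (fun j _ => ?_)
    rw [map_mul, map_mul, map_ofNat]
    rfl
  have h1 : ∀ j, ∑ i, c i * gval Φ id (fun x => fderiv ℝ (F j) x (v i)) = 0 := by
    intro j
    rw [← hc _ (hF j), hF0, map_zero]
  change D (gval Φ id (fun x : E => ‖x‖ ^ 2)) = 0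
  rw [hc _ hnorm]
  simp only [hgrad]
  calc _ = ∑ j, (2 * Φ (fun x => a x j)) *
        ∑ i, c i * gval Φ id (fun x => fderiv ℝ (F j) x (v i)) := by
        simp only [Finset.mul_sum]
        rw [Finset.sum_comm]
        refine Finset.sum_congr rfl (fun j _ => Finset.sum_congr rfl (fun i _ => ?_))
        ring
    _ = 0 := by simp [h1]

end

/-! ### The lifted vector field -/

section

open Filter Topology
open scoped ContDiff Manifold

/-- Where a family of linear maps is surjective it stays so nearby, and the equation
`T x (v x) = b x` has a local `C¹` solution. -/
theorem exists_local_section {E F : Type*} [NormedAddCommGroup E] [NormedSpace ℝ E]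
    [NormedAddCommGroup F] [NormedSpace ℝ F] [FiniteDimensional ℝ F]
    {T : E → E →L[ℝ] F} {b : E → F} {x₀ : E} (hT : ContDiffAt ℝ 1 T x₀) (hb : ContDiffAt ℝ 1 b x₀)
    (hs : Function.Surjective (T x₀)) :
    (∀ᶠ x in 𝓝 x₀, Function.Surjective (T x)) ∧
      ∃ v : E → E, ContDiffAt ℝ 1 v x₀ ∧ ∀ᶠ x in 𝓝 x₀, T x (v x) = b x := by
  have : CompleteSpace F := FiniteDimensional.complete ℝ F
  obtain ⟨R, hR⟩ := (T x₀).exists_rightInverse_of_surjective (LinearMap.range_eq_top.2 hs)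
  have hTR : ContDiffAt ℝ 1 (fun x => (T x).comp R) x₀ := hT.clm_comp contDiffAt_const
  have h0 : (T x₀).comp R = (ContinuousLinearEquiv.refl ℝ F : F →L[ℝ] F) := hR
  have hmem : ∀ᶠ x in 𝓝 x₀, (T x).comp R ∈ Set.range ((↑) : (F ≃L[ℝ] F) → F →L[ℝ] F) := by
    refine hTR.continuousAt.eventually ?_
    simp only [h0]
    exact ContinuousLinearEquiv.nhds _
  refine ⟨?_, fun x => R (ContinuousLinearMap.inverse ((T x).comp R) (b x)), ?_, ?_⟩
  · filter_upwards [hmem]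
    rintro x ⟨e, he⟩ y
    refine ⟨R (e.symm y), ?_⟩
    have := DFunLike.congr_fun he (e.symm y)
    simpa using this.symm
  · have h1 : ContDiffAt ℝ 1 (fun x => ContinuousLinearMap.inverse ((T x).comp R)) x₀ := by
      refine ContDiffAt.comp x₀ (g := ContinuousLinearMap.inverse) ?_ hTR
      rw [h0]
      exact contDiffAt_map_inverse _
    exact R.contDiff.contDiffAt.comp x₀ (h1.clm_apply hb)
  · filter_upwards [hmem]
    rintro x ⟨e, he⟩
    rw [← he, ContinuousLinearMap.inverse_equiv]
    have := DFunLike.congr_fun he (e.symm (b x))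
    simpa using this.symm

theorem contDiffAt_fderiv_prod_innerSL {E : Type*} [NormedAddCommGroup E] [InnerProductSpace ℝ E]
    {g : E → ℂ} {x : E} (hg : AnalyticAt ℝ g x) :
    ContDiffAt ℝ 1 (fun x => (fderiv ℝ g x).prod (innerSL ℝ x)) x := by
  have h3 : ContDiffAt ℝ 1 (fun x : E => innerSL ℝ x) x := (innerSL ℝ).contDiff.contDiffAt
  have h4 : (fun x : E => (fderiv ℝ g x).prod (innerSL ℝ x)) = fun x =>
      (ContinuousLinearMap.inl ℝ ℂ ℝ).comp (fderiv ℝ g x) +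
        (ContinuousLinearMap.inr ℝ ℂ ℝ).comp (innerSL ℝ x) := by
    funext x
    ext v <;> simp
  rw [h4]
  exact (contDiffAt_const.clm_comp hg.fderiv.contDiffAt).add (contDiffAt_const.clm_comp h3)

/-- A compactly supported `C¹` vector field which near `N` lifts the rotation field `w ↦ i w` of `ℂ`
through `g`, and near `S` is tangent to the spheres centred at `0`. The conditions are convex in `X y`
and have local solutions, so a partition of unity glues these. -/
theorem exists_adapted_field {E : Type*} [NormedAddCommGroup E] [InnerProductSpace ℝ E]
    [FiniteDimensional ℝ E] {U N S : Set E} (hU : IsOpen U) {g : E → ℂ}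
    (hg : AnalyticOnNhd ℝ g U) (hN : IsCompact N) (hNU : N ⊆ U) (hS : IsCompact S) (hSN : S ⊆ N)
    (h1 : ∀ x ∈ N, Function.Surjective (fderiv ℝ g x))
    (h2 : ∀ x ∈ S, Function.Surjective ((fderiv ℝ g x).prod (innerSL ℝ x))) :
    ∃ X : E → E, ContDiff ℝ 1 X ∧ HasCompactSupport X ∧
      (∀ x ∈ N, ∀ᶠ y in 𝓝 x, fderiv ℝ g y (X y) = Complex.I * g y) ∧
      (∀ x ∈ S, ∀ᶠ y in 𝓝 x, inner ℝ y (X y) = 0) := by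
  have hT1 : ∀ x ∈ U, ContDiffAt ℝ 1 (fderiv ℝ g) x := fun x hx => (hg x hx).fderiv.contDiffAt
  have hT2 : ∀ x ∈ U, ContDiffAt ℝ 1 (fun x => (fderiv ℝ g x).prod (innerSL ℝ x)) x :=
    fun x hx => contDiffAt_fderiv_prod_innerSL (hg x hx)
  have hb1 : ∀ x ∈ U, ContDiffAt ℝ 1 (fun x => Complex.I * g x) x := fun x hx =>
    contDiffAt_const.mul (hg x hx).contDiffAt
  have hb2 : ∀ x ∈ U, ContDiffAt ℝ 1 (fun x => (Complex.I * g x, (0 : ℝ))) x := fun x hx =>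
    (hb1 x hx).prodMk contDiffAt_const
  let O₁ : Set E := {x | x ∈ U ∧ Function.Surjective (fderiv ℝ g x)}
  have hO₁ : IsOpen O₁ := by
    refine isOpen_iff_mem_nhds.2 fun x hx => ?_
    exact Eventually.and (hU.mem_nhds hx.1) (exists_local_section (hT1 x hx.1) (hb1 x hx.1) hx.2).1
  obtain ⟨K₁, hK₁, hNK₁, hK₁O⟩ := exists_compact_between hN hO₁ fun x hx => ⟨hNU hx, h1 x hx⟩
  let O₂ : Set E := {x | x ∈ interior K₁ ∧
    Function.Surjective ((fderiv ℝ g x).prod (innerSL ℝ x))}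
  have hKU : K₁ ⊆ U := fun x hx => (hK₁O hx).1
  have hO₂ : IsOpen O₂ := by
    refine isOpen_iff_mem_nhds.2 fun x hx => ?_
    have hxU := hKU (interior_subset hx.1)
    exact Eventually.and (isOpen_interior.mem_nhds hx.1)
      (exists_local_section (hT2 x hxU) (hb2 x hxU) hx.2).1
  obtain ⟨K₂, hK₂, hSK₂, hK₂O⟩ := exists_compact_between hS hO₂
    fun x hx => ⟨hNK₁ (hSN hx), h2 x hx⟩
  obtain ⟨r, hr⟩ := hK₁.isBounded.subset_ball 0
  let t : E → Set E := fun x => {v | (x ∈ K₁ → fderiv ℝ g x v = Complex.I * g x) ∧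
    (x ∈ K₂ → inner ℝ x v = 0) ∧ (x ∉ Metric.ball (0 : E) r → v = 0)}
  have ht : ∀ x, Convex ℝ (t x) := by
    intro x v hv w hw a b ha hb hab
    refine ⟨fun h => ?_, fun h => ?_, fun h => ?_⟩
    · rw [map_add, map_smul, map_smul, hv.1 h, hw.1 h, ← add_smul, hab, one_smul]
    · rw [inner_add_right, inner_smul_right, inner_smul_right, hv.2.1 h, hw.2.1 h]; simp
    · rw [hv.2.2 h, hw.2.2 h]; simp
  have hK21 : K₂ ⊆ K₁ := fun x hx => interior_subset (hK₂O hx).1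
  have key : ∀ x : E, ∃ v : E → E, ContDiffAt ℝ 1 v x ∧ ∀ᶠ y in 𝓝 x, v y ∈ t y := by
    intro x
    by_cases hx1 : x ∈ K₁
    · have hball : ∀ᶠ y in 𝓝 x, y ∈ Metric.ball (0 : E) r := Metric.isOpen_ball.mem_nhds (hr hx1)
      by_cases hx2 : x ∈ K₂
      · obtain ⟨_, v, hv, hv'⟩ := exists_local_section (hT2 x (hKU hx1)) (hb2 x (hKU hx1))
          (hK₂O hx2).2
        refine ⟨v, hv, ?_⟩
        filter_upwards [hv', hball] with y hy hyb
        have hy1 := congrArg Prod.fst hy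
        have hy2 := congrArg Prod.snd hy
        exact ⟨fun _ => hy1, fun _ => hy2, fun h => absurd hyb h⟩
      · obtain ⟨_, v, hv, hv'⟩ := exists_local_section (hT1 x (hKU hx1)) (hb1 x (hKU hx1))
          (hK₁O hx1).2
        refine ⟨v, hv, ?_⟩
        filter_upwards [hv', hball, hK₂.isClosed.isOpen_compl.mem_nhds hx2] with y hy hyb hy2
        exact ⟨fun _ => hy, fun h => absurd h hy2, fun h => absurd hyb h⟩
    · refine ⟨fun _ => 0, contDiffAt_const, ?_⟩
      filter_upwards [hK₁.isClosed.isOpen_compl.mem_nhds hx1] with y hy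
      exact ⟨fun h => absurd h hy, fun h => absurd (hK21 h) hy, fun _ => rfl⟩
  obtain ⟨X, hX⟩ := exists_contMDiffMap_forall_mem_convex_of_local (n := 1) 𝓘(ℝ, E) ht (by
    intro x
    obtain ⟨v, hv, hv'⟩ := key x
    obtain ⟨s, hs, hvs⟩ := hv.contDiffOn le_rfl (by simp)
    refine ⟨_, Filter.inter_mem (by simpa using hs) hv', v, ?_, fun y hy => hy.2⟩
    exact (hvs.mono Set.inter_subset_left).contMDiffOn)
  refine ⟨X, X.contMDiff.contDiff, ?_, fun x hx => ?_, fun x hx => ?_⟩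
  · refine HasCompactSupport.intro (isCompact_closedBall (0 : E) r) (fun x hx => ?_)
    exact (hX x).2.2 fun h => hx (Metric.ball_subset_closedBall h)
  · filter_upwards [mem_interior_iff_mem_nhds.1 (hNK₁ hx)] with y hy
    exact (hX y).1 hy
  · filter_upwards [mem_interior_iff_mem_nhds.1 (hSK₂ hx)] with y hy
    exact (hX y).2.1 hy

end

/-! ### The flow on the tube -/

section

open Filter Topology
open scoped ContDiff Manifold

theorem eqOn_of_hasDerivWithinAt_zero {F : Type*} [NormedAddCommGroup F] [NormedSpace ℝ F]
    {h : ℝ → F} {s : Set ℝ} (hs : Convex ℝ s) (hh : ∀ t ∈ s, HasDerivWithinAt h 0 s t)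
    {a b : ℝ} (ha : a ∈ s) (hb : b ∈ s) : h b = h a := by
  have := Convex.norm_image_sub_le_of_norm_hasDerivWithin_le (C := 0) hh (by simp) hs ha hb
  rw [zero_mul] at this
  exact sub_eq_zero.1 (norm_le_zero_iff.1 this)

/-- Along an integral curve of a lift of the rotation field, `g` rotates at unit speed. -/
theorem rotation_along_curve {E : Type*} [NormedAddCommGroup E] [InnerProductSpace ℝ E]
    {g : E → ℂ} {X : E → E} {γ : ℝ → E} {s : Set ℝ} (hs : Convex ℝ s)
    (hγ : ∀ t ∈ s, HasDerivWithinAt γ (X (γ t)) s t)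
    (hd : ∀ t ∈ s, DifferentiableAt ℝ g (γ t))
    (hX : ∀ t ∈ s, fderiv ℝ g (γ t) (X (γ t)) = Complex.I * g (γ t))
    {a b : ℝ} (ha : a ∈ s) (hb : b ∈ s) :
    g (γ b) = Complex.exp ((b - a : ℝ) * Complex.I) * g (γ a) := by
  have h1 : ∀ t ∈ s, HasDerivWithinAt
      (fun t : ℝ => Complex.exp (-(t * Complex.I)) * g (γ t)) 0 s t := by
    intro t ht
    have h2 : HasDerivWithinAt (fun t => g (γ t)) (Complex.I * g (γ t)) s t := by
      rw [← hX t ht]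
      exact (hd t ht).hasFDerivAt.comp_hasDerivWithinAt t (hγ t ht)
    have h3 : HasDerivAt (fun t : ℝ => Complex.exp (-(t * Complex.I)))
        (Complex.exp (-(t * Complex.I)) * (-(1 * Complex.I))) t :=
      (((Complex.ofRealCLM.hasDerivAt (x := t)).mul_const Complex.I).neg).cexp
    refine (h3.hasDerivWithinAt.mul h2).congr_deriv ?_
    ring
  have h2 := eqOn_of_hasDerivWithinAt_zero hs h1 ha hb
  calc g (γ b) = Complex.exp (b * Complex.I) * (Complex.exp (-(b * Complex.I)) * g (γ b)) := by
        rw [← mul_assoc, ← Complex.exp_add]; simp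
    _ = _ := by
        rw [h2, ← mul_assoc, ← Complex.exp_add]
        congr 2
        push_cast
        ring

/-- Integral curves of a field tangent to the spheres centred at `0` stay on a sphere. -/
theorem norm_const_along_curve {E : Type*} [NormedAddCommGroup E] [InnerProductSpace ℝ E]
    {X : E → E} {γ : ℝ → E} {s : Set ℝ} (hs : Convex ℝ s)
    (hγ : ∀ t ∈ s, HasDerivWithinAt γ (X (γ t)) s t)
    (hX : ∀ t ∈ s, inner ℝ (γ t) (X (γ t)) = 0)
    {a b : ℝ} (ha : a ∈ s) (hb : b ∈ s) : ‖γ b‖ = ‖γ a‖ := by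
  have h1 : ∀ t ∈ s, HasDerivWithinAt (fun t : ℝ => ‖γ t‖ ^ 2) 0 s t := by
    intro t ht
    refine ((hγ t ht).norm_sq).congr_deriv ?_
    rw [hX t ht, mul_zero]
  have h2 := eqOn_of_hasDerivWithinAt_zero hs h1 ha hb
  exact (sq_eq_sq₀ (norm_nonneg _) (norm_nonneg _)).1 h2

/-- An integral curve starting in the tube stays in it, and `g` rotates along it. The set of times
spent in the tube is closed by continuity, and open because the curve stays on the boundary sphere
whenever it meets it. -/
theorem curve_mem_tube {E : Type*} [NormedAddCommGroup E] [InnerProductSpace ℝ E]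
    {g : E → ℂ} {ε η : ℝ} {X : E → E}
    (hd : ∀ x ∈ Metric.closedBall (0 : E) ε, ∀ᶠ y in 𝓝 x, DifferentiableAt ℝ g y)
    (h1 : ∀ x ∈ Metric.closedBall (0 : E) ε, ‖g x‖ = η →
      ∀ᶠ y in 𝓝 x, fderiv ℝ g y (X y) = Complex.I * g y)
    (h2 : ∀ x, ‖x‖ = ε → ‖g x‖ = η → ∀ᶠ y in 𝓝 x, inner ℝ y (X y) = 0)
    {γ : ℝ → E} {a b : ℝ} (hγ : ∀ t ∈ Set.Icc a b, HasDerivWithinAt γ (X (γ t)) (Set.Icc a b) t)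
    {s t : ℝ} (hs : s ∈ Set.Icc a b) (ht : t ∈ Set.Icc a b)
    (h0 : γ s ∈ Metric.closedBall (0 : E) ε ∧ ‖g (γ s)‖ = η) :
    (γ t ∈ Metric.closedBall (0 : E) ε ∧ ‖g (γ t)‖ = η) ∧
      g (γ t) = Complex.exp ((t - s : ℝ) * Complex.I) * g (γ s) := by
  classical
  let N : Set E := {x | x ∈ Metric.closedBall (0 : E) ε ∧ ‖g x‖ = η}
  have hcont : ContinuousOn γ (Set.Icc a b) := fun t ht => (hγ t ht).continuousWithinAt
  have hloc : ContinuousOn (fun t => decide (γ t ∈ N)) (Set.Icc a b) := by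
    intro u hu
    refine ContinuousWithinAt.congr_of_eventuallyEq (f := fun _ => decide (γ u ∈ N))
      continuousWithinAt_const ?_ rfl
    by_cases huN : γ u ∈ N
    · have hA := (hcont u hu).eventually ((hd _ huN.1).and (h1 _ huN.1 huN.2))
      -- `γ` stays in the ball for a short time
      have hB : ∀ᶠ v in 𝓝[Set.Icc a b] u, γ v ∈ Metric.closedBall (0 : E) ε := by
        rcases (mem_closedBall_zero_iff.1 huN.1).lt_or_eq with hlt | heq
        · filter_upwards [(hcont u hu).eventually (Metric.isOpen_ball.mem_nhds
            (mem_ball_zero_iff.2 hlt))] with v hv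
          exact Metric.ball_subset_closedBall hv
        · have hC := (hcont u hu).eventually (h2 _ heq huN.2)
          obtain ⟨δ, hδ, hC⟩ := Metric.mem_nhdsWithin_iff.1 hC
          refine Metric.mem_nhdsWithin_iff.2 ⟨δ, hδ, fun v hv => ?_⟩
          have := norm_const_along_curve (X := X) (γ := γ)
            (s := Metric.ball u δ ∩ Set.Icc a b) ((convex_ball u δ).inter (convex_Icc a b))
            (fun t ht => (hγ t ht.2).mono Set.inter_subset_right) (fun t ht => hC ht)
            ⟨Metric.mem_ball_self hδ, hu⟩ hv
          exact mem_closedBall_zero_iff.2 (this.trans heq).le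
      obtain ⟨δ, hδ, hA⟩ := Metric.mem_nhdsWithin_iff.1 hA
      filter_upwards [hB, inter_mem_nhdsWithin _ (Metric.ball_mem_nhds u hδ)] with v hv hv2
      have := rotation_along_curve (X := X) (γ := γ) (g := g)
        (s := Metric.ball u δ ∩ Set.Icc a b) ((convex_ball u δ).inter (convex_Icc a b))
        (fun t ht => (hγ t ht.2).mono Set.inter_subset_right) (fun t ht => (hA ht).1)
        (fun t ht => (hA ht).2) ⟨Metric.mem_ball_self hδ, hu⟩ ⟨hv2.2, hv2.1⟩
      have hvN : γ v ∈ N := by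
        refine ⟨hv, ?_⟩
        rw [this, norm_mul, Complex.norm_exp_ofReal_mul_I, one_mul]
        exact huN.2
      simp [hvN, huN]
    · have hne : ∀ᶠ y in 𝓝 (γ u), y ∉ N := by
        by_cases hub : γ u ∈ Metric.closedBall (0 : E) ε
        · have hg : ContinuousAt (fun y => ‖g y‖) (γ u) := (hd _ hub).self_of_nhds.continuousAt.norm
          filter_upwards [hg.eventually_ne fun h => huN ⟨hub, h⟩] with y hy hyN
          exact hy hyN.2
        · filter_upwards [Metric.isClosed_closedBall.isOpen_compl.mem_nhds hub] with y hy hyN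
          exact hy hyN.1
      filter_upwards [(hcont u hu).eventually hne] with v hv
      simp [hv, huN]
  have hall : ∀ v ∈ Set.Icc a b, γ v ∈ N := by
    intro v hv
    have := isPreconnected_Icc.constant hloc hs hv
    have h0' : γ s ∈ N := h0
    simpa [h0'] using this
  exact ⟨hall t ht, rotation_along_curve (X := X) (convex_Icc a b) hγ
    (fun t ht => (hd _ (hall t ht).1).self_of_nhds)
    (fun t ht => (h1 _ (hall t ht).1 (hall t ht).2).self_of_nhds) hs ht⟩

/-- The flow on the tube, for times in `[-T, T]` (and constant in time outside this interval). -/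
theorem exists_tube_flow {E : Type*} [NormedAddCommGroup E] [InnerProductSpace ℝ E]
    [FiniteDimensional ℝ E] {g : E → ℂ} {ε η : ℝ} {X : E → E} (hε : 0 < ε)
    (hX : ContDiff ℝ 1 X) (hXs : HasCompactSupport X)
    (hd : ∀ x ∈ Metric.closedBall (0 : E) ε, ∀ᶠ y in 𝓝 x, DifferentiableAt ℝ g y)
    (h1 : ∀ x ∈ Metric.closedBall (0 : E) ε, ‖g x‖ = η →
      ∀ᶠ y in 𝓝 x, fderiv ℝ g y (X y) = Complex.I * g y)
    (h2 : ∀ x, ‖x‖ = ε → ‖g x‖ = η → ∀ᶠ y in 𝓝 x, inner ℝ y (X y) = 0)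
    {T : ℝ} (hT : 0 < T) :
    let N : Set E := {x ∈ Metric.closedBall (0 : E) ε | ‖g x‖ = η}
    ∃ φ : ℝ → N → N, Continuous (Function.uncurry φ) ∧ ∀ t ∈ Set.Icc (-T) T, ∀ z : N,
      g (φ t z) = Complex.exp (t * Complex.I) * g z ∧ φ (-t) (φ t z) = z := by
  intro N
  have : CompleteSpace E := FiniteDimensional.complete ℝ E
  obtain ⟨K, hK⟩ := ContDiff.lipschitzWith_of_hasCompactSupport hXs hX one_ne_zero
  obtain ⟨C, hC⟩ := hXs.exists_bound_of_continuous hX.continuous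
  have hC0 : 0 ≤ C := (norm_nonneg _).trans (hC 0)
  have hmem0 : (0 : ℝ) ∈ Set.Icc (-(3 * T)) (3 * T) := ⟨by linarith, by linarith⟩
  -- times up to `3 * T` leave room for comparing `φ (-t) (φ t z)` with the flow line of `z`
  have hPL : IsPicardLindelof (fun _ => X) (⟨0, hmem0⟩ : Set.Icc (-(3 * T)) (3 * T)) (0 : E)
      (⟨ε + C * (3 * T), by positivity⟩) ⟨ε, hε.le⟩ ⟨C, hC0⟩ K :=
    { lipschitzOnWith := fun t _ => hK.lipschitzOnWith
      continuousOn := fun x _ => continuousOn_const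
      norm_le := fun t _ x _ => hC x
      mul_max_le := by
        change C * max (3 * T - 0) (0 - -(3 * T)) ≤ ε + C * (3 * T) - ε
        simp }
  obtain ⟨α', hα, hαc⟩ := hPL.exists_forall_mem_closedBall_eq_hasDerivWithinAt_continuousOn
  let α : E → ℝ → E := fun x t => α' (x, t)
  have hα : ∀ x ∈ Metric.closedBall (0 : E) ε, α x 0 = x ∧ ∀ t ∈ Set.Icc (-(3 * T)) (3 * T),
      HasDerivWithinAt (α x) (X (α x t)) (Set.Icc (-(3 * T)) (3 * T)) t := hα
  change ContinuousOn _ (Metric.closedBall (0 : E) ε ×ˢ _) at hαc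
  have hinv : ∀ x ∈ N, ∀ t ∈ Set.Icc (-(3 * T)) (3 * T), α x t ∈ N ∧
      g (α x t) = Complex.exp (t * Complex.I) * g x := by
    intro x hx t ht
    have := curve_mem_tube hd h1 h2 (hα x hx.1).2 hmem0 ht (by rw [(hα x hx.1).1]; exact hx)
    rw [(hα x hx.1).1, sub_zero] at this
    exact this
  have hTT : ∀ t ∈ Set.Icc (-T) T, t ∈ Set.Icc (-(3 * T)) (3 * T) := fun t ht =>
    ⟨by linarith [ht.1], by linarith [ht.2]⟩
  have hT0 : -T ≤ T := by linarith
  refine ⟨fun t z => ⟨α z (Set.projIcc (-T) T hT0 t), (hinv z z.2 _ (hTT _ (Subtype.mem _))).1⟩,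
    ?_, fun t ht z => ⟨?_, ?_⟩⟩
  · refine Continuous.subtype_mk ?_ _
    refine hαc.comp_continuous (f := fun q : ℝ × N =>
      ((q.2 : E), ((Set.projIcc (-T) T hT0 q.1 : Set.Icc (-T) T) : ℝ))) ?_ ?_
    · exact (continuous_subtype_val.comp continuous_snd).prodMk
        (continuous_subtype_val.comp (continuous_projIcc.comp continuous_fst))
    · exact fun q => ⟨q.2.2.1, hTT _ (Subtype.mem _)⟩
  · simp only [Set.projIcc_of_mem hT0 ht]
    exact (hinv z z.2 t (hTT t ht)).2
  · have ht' : -t ∈ Set.Icc (-T) T := ⟨by linarith [ht.2], by linarith [ht.1]⟩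
    apply Subtype.ext
    simp only [Set.projIcc_of_mem hT0 ht, Set.projIcc_of_mem hT0 ht']
    have hy := (hinv z z.2 t (hTT t ht)).1
    have hder : ∀ x ∈ N, ∀ u ∈ Set.Ioo (-(3 * T)) (3 * T), HasDerivAt (α x) (X (α x u)) u :=
      fun x hx u hu => ((hα x hx.1).2 u (Set.Ioo_subset_Icc_self hu)).hasDerivAt
        (Icc_mem_nhds hu.1 hu.2)
    have huniq := ODE_solution_unique_of_mem_Ioo (v := fun _ => X) (s := fun _ => Set.univ)
      (f := α (α z t)) (g := fun u => α z (u + t)) (a := -(2 * T)) (b := 2 * T) (t₀ := 0) (K := K)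
      (fun _ _ => hK.lipschitzOnWith) ⟨by linarith, by linarith⟩
      (fun u hu => ⟨hder _ hy u ⟨by linarith [hu.1], by linarith [hu.2]⟩, trivial⟩)
      (fun u hu => ⟨(hder z z.2 (u + t) ⟨by linarith [hu.1, ht.1],
        by linarith [hu.2, ht.2]⟩).comp_add_const u t, trivial⟩)
      (by simp [(hα _ hy.1).1])
    have := huniq (x := -t) ⟨by linarith [ht.2], by linarith [ht.1]⟩
    rw [this]
    simp [(hα z z.2.1).1]

end

/-! ### Local triviality -/

open Filter Topology

/-- If the base is a circle of radius `η` and the total space carries a continuous family of bijections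
covering the rotations of the base, then `p` is locally trivial: the points over `w` are rotated back
to the fibre over `η`, by an angle `θ w` continuous on the complement of the point opposite to `b`. -/
theorem isLocTrivFib_of_rotation {Z B : Type} [TopologicalSpace Z] [TopologicalSpace B]
    {p : Z → B} (hp : Continuous p) {q : B → ℂ} (hq : Continuous q) (hqi : Function.Injective q)
    {η : ℝ} (hη : 0 < η) (hqη : ∀ b, ‖q b‖ = η) {φ : ℝ → Z → Z}
    (hφ : Continuous (Function.uncurry φ))
    (hrot : ∀ t ∈ Set.Icc (-(2 * Real.pi)) (2 * Real.pi), ∀ z,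
      q (p (φ t z)) = Complex.exp (t * Complex.I) * q (p z) ∧ φ (-t) (φ t z) = z) :
    IsLocTrivFib p := by
  refine ⟨{z : Z // q (p z) = η}, inferInstance, hp, fun b => ?_⟩
  have hq0 : ∀ b, q b ≠ 0 := fun b h => by
    have := hqη b
    rw [h, norm_zero] at this
    exact hη.ne this
  let W : Set B := {w | q w / q b ∈ Complex.slitPlane}
  let θ : B → ℝ := fun w => (q b).arg + (q w / q b).arg
  have hθI : ∀ w, θ w ∈ Set.Icc (-(2 * Real.pi)) (2 * Real.pi) := fun w => by
    have h1 := Complex.neg_pi_lt_arg (q b)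
    have h2 := Complex.neg_pi_lt_arg (q w / q b)
    have h3 := Complex.arg_le_pi (q b)
    have h4 := Complex.arg_le_pi (q w / q b)
    constructor <;> simp only [θ] <;> linarith
  have hθI' : ∀ w, -θ w ∈ Set.Icc (-(2 * Real.pi)) (2 * Real.pi) := fun w =>
    ⟨by linarith [(hθI w).2], by linarith [(hθI w).1]⟩
  have hθ : ∀ w, q w = Complex.exp (θ w * Complex.I) * η := by
    intro w
    have h1 := Complex.norm_mul_exp_arg_mul_I (q b)
    have h2 := Complex.norm_mul_exp_arg_mul_I (q w / q b)
    rw [norm_div, hqη, hqη, div_self hη.ne', Complex.ofReal_one, one_mul] at h2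
    rw [hqη] at h1
    simp only [θ, Complex.ofReal_add, add_mul, Complex.exp_add]
    rw [h2, mul_right_comm, mul_comm _ (η : ℂ), h1, mul_div_cancel₀ _ (hq0 b)]
  have hθc : Continuous fun w : W => θ w := by
    refine continuous_const.add ?_
    refine continuous_iff_continuousAt.2 fun w => ?_
    exact (Complex.continuousAt_arg w.2).comp
      (f := fun w : W => q w / q b)
      ((hq.comp continuous_subtype_val).div_const (q b)).continuousAt
  have hexp : ∀ t : ℝ, Complex.exp ((-t : ℝ) * Complex.I) * Complex.exp (t * Complex.I) = 1 := by
    intro t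
    rw [← Complex.exp_add]
    simp
  refine ⟨W, Complex.isOpen_slitPlane.preimage (hq.div_const (q b)), ?_, ?_⟩
  · change q b / q b ∈ Complex.slitPlane
    rw [div_self (hq0 b)]
    exact Complex.one_mem_slitPlane
  have hto : ∀ z : p ⁻¹' W, q (p (φ (-θ (p z)) z)) = η := fun z => by
    rw [(hrot _ (hθI' _) _).1, hθ (p z), ← mul_assoc, hexp, one_mul]
  have hinv : ∀ (w : W) (y : {z : Z // q (p z) = η}), p (φ (θ w) y) = w := fun w y => by
    apply hqi
    rw [(hrot _ (hθI _) _).1, y.2, ← hθ]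
  refine ⟨{
    toFun := fun z => (⟨p z, z.2⟩, ⟨φ (-θ (p z)) z, hto z⟩)
    invFun := fun a => ⟨φ (θ a.1) a.2, by
      change p _ ∈ W
      rw [hinv]
      exact a.1.2⟩
    left_inv := fun z => ?_
    right_inv := fun a => ?_
    continuous_toFun := ?_
    continuous_invFun := ?_ }, fun z => rfl⟩
  · apply Subtype.ext
    have := (hrot _ (hθI' (p z)) z).2
    rwa [neg_neg] at this
  · apply Prod.ext
    · exact Subtype.ext (hinv a.1 a.2)
    · apply Subtype.ext
      change φ (-θ (p (φ (θ a.1) a.2))) (φ (θ a.1) a.2) = a.2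
      rw [hinv]
      exact (hrot _ (hθI _) _).2
  · have h1 : Continuous fun z : p ⁻¹' W => (⟨p z, z.2⟩ : W) :=
      (hp.comp continuous_subtype_val).subtype_mk _
    refine h1.prodMk (Continuous.subtype_mk ?_ _)
    exact hφ.comp ((hθc.comp h1).neg.prodMk continuous_subtype_val)
  · refine Continuous.subtype_mk ?_ _
    exact hφ.comp ((hθc.comp continuous_fst).prodMk (continuous_subtype_val.comp continuous_snd))

theorem stmt_17 (n : ℕ) (hn : 1 ≤ n)
    (U : Set (EuclideanSpace ℝ (Fin (n + 2)))) (hU : IsOpen U)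
    (h0U : (0 : EuclideanSpace ℝ (Fin (n + 2))) ∈ U)
    (f : EuclideanSpace ℝ (Fin (n + 2)) → EuclideanSpace ℝ (Fin 2))
    (hf : AnalyticOnNhd ℝ f U) (hf0 : f 0 = 0)
    -- f is locally surjective at 0
    (hloc : ∀ W ∈ nhds (0 : EuclideanSpace ℝ (Fin (n + 2))),
      f '' (W ∩ U) ∈ nhds (0 : EuclideanSpace ℝ (Fin 2)))
    -- 0 is an isolated critical point
    (hsub : ∀ x ∈ U \ {(0 : EuclideanSpace ℝ (Fin (n + 2)))},
      Function.Surjective (fderiv ℝ f x)) :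
    ∃ ε₀ > (0 : ℝ), Metric.closedBall (0 : EuclideanSpace ℝ (Fin (n + 2))) ε₀ ⊆ U ∧
      ∀ ε : ℝ, 0 < ε → ε ≤ ε₀ →
      ∃ η₀ > (0 : ℝ), ∀ η : ℝ, 0 < η → η ≤ η₀ →
        ∃ p : ({x ∈ Metric.closedBall (0 : EuclideanSpace ℝ (Fin (n + 2))) ε | ‖f x‖ = η} :
              Set _) → ({w : EuclideanSpace ℝ (Fin 2) | ‖w‖ = η} : Set _),
          (∀ x, (p x : EuclideanSpace ℝ (Fin 2)) = f x.1) ∧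
          IsLocTrivFib p := by
  have htr := eventually_nhdsWithin_iff.1 (eventually_transverse_spheres (hf 0 h0U))
  obtain ⟨ε₀, hε₀, hball⟩ := Metric.nhds_basis_closedBall.eventually_iff.1
    (htr.and (hU.mem_nhds h0U))
  have hballU : Metric.closedBall 0 ε₀ ⊆ U := fun x hx => (hball hx).2
  refine ⟨ε₀, hε₀, hballU, fun ε hε hεε₀ => ?_⟩
  have hεU : Metric.closedBall 0 ε ⊆ U := (Metric.closedBall_subset_closedBall hεε₀).trans hballU
  -- identify the target with `ℂ`
  let L : EuclideanSpace ℝ (Fin 2) ≃ₗᵢ[ℝ] ℂ := Complex.orthonormalBasisOneI.repr.symm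
  let g : EuclideanSpace ℝ (Fin (n + 2)) → ℂ := fun x => L (f x)
  have hg : AnalyticOnNhd ℝ g U := fun x hx =>
    (L.toContinuousLinearEquiv.toContinuousLinearMap.analyticAt (f x)).comp (hf x hx)
  have hgf : ∀ x, ‖g x‖ = ‖f x‖ := fun x => L.norm_map _
  have hgd : ∀ x ∈ U, ∀ v, fderiv ℝ g x v = L (fderiv ℝ f x v) := by
    intro x hx v
    have := (L.toContinuousLinearEquiv.toContinuousLinearMap.hasFDerivAt.comp x
      (hf x hx).differentiableAt.hasFDerivAt).fderiv
    exact DFunLike.congr_fun this v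
  have hgs : ∀ x ∈ U, x ≠ 0 → Function.Surjective (fderiv ℝ g x) := by
    intro x hx hx0 c
    obtain ⟨v, hv⟩ := hsub x ⟨hx, hx0⟩ (L.symm c)
    exact ⟨v, by rw [hgd x hx, hv, L.apply_symm_apply]⟩
  let Q : Set (EuclideanSpace ℝ (Fin (n + 2))) :=
    {x | ∀ᶠ y in 𝓝 x, Function.Surjective ((fderiv ℝ g y).prod (innerSL ℝ y))}
  have hQ : IsOpen Q := isOpen_setOfPred_eventually_nhds
  have hTd : ∀ x ∈ U, ContDiffAt ℝ 1 (fun x => (fderiv ℝ g x).prod (innerSL ℝ x)) x :=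
    fun x hx => contDiffAt_fderiv_prod_innerSL (hg x hx)
  have hsph : ∀ x, ‖x‖ = ε → f x = 0 → x ∈ Q := by
    intro x hx hfx
    have hx0 : x ≠ 0 := fun h => by
      rw [h, norm_zero] at hx
      exact hε.ne hx
    have hxb : x ∈ Metric.closedBall 0 ε₀ := mem_closedBall_zero_iff.2 (hx.le.trans hεε₀)
    obtain ⟨v, hv, hxv⟩ := (hball hxb).1 hx0 hfx
    refine (exists_local_section (b := fun _ => 0) (hTd x (hballU hxb)) contDiffAt_const ?_).1
    rintro ⟨c, r⟩
    obtain ⟨w, hw⟩ := hgs x (hballU hxb) hx0 c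
    refine ⟨w + ((r - inner ℝ x w) / inner ℝ x v) • v, Prod.ext ?_ ?_⟩
    · change fderiv ℝ g x _ = c
      rw [map_add, map_smul, hw, hgd x (hballU hxb) v, hv]
      simp
    · change inner ℝ x _ = r
      rw [inner_add_right, inner_smul_right]
      field_simp
      ring
  -- points of the sphere where transversality fails have `‖g‖` bounded below
  have hcpt : IsCompact (Metric.sphere (0 : EuclideanSpace ℝ (Fin (n + 2))) ε \ Q) :=
    (isCompact_sphere 0 ε).diff hQ
  have hgc : ContinuousOn g (Metric.closedBall 0 ε) := hg.continuousOn.mono hεU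
  obtain ⟨η₁, hη₁, hmin⟩ := hcpt.exists_forall_le' (f := fun x => ‖g x‖) (a := 0)
    (hgc.mono (Set.sdiff_subset.trans Metric.sphere_subset_closedBall)).norm (fun x hx => by
      rw [hgf]
      refine norm_pos_iff.2 fun h => hx.2 (hsph x (mem_sphere_zero_iff_norm.1 hx.1) h))
  refine ⟨η₁ / 2, half_pos hη₁, fun η hη hηη₁ => ?_⟩
  let N : Set (EuclideanSpace ℝ (Fin (n + 2))) := {x ∈ Metric.closedBall 0 ε | ‖g x‖ = η}
  let S : Set (EuclideanSpace ℝ (Fin (n + 2))) := {x ∈ Metric.sphere 0 ε | ‖g x‖ = η}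
  have hN : IsCompact N := (isCompact_closedBall 0 ε).of_isClosed_subset
    (hgc.norm.preimage_isClosed_of_isClosed Metric.isClosed_closedBall isClosed_singleton)
    (fun x hx => hx.1)
  have hSc : S = N ∩ Metric.sphere 0 ε := by
    ext x
    exact ⟨fun h => ⟨⟨Metric.sphere_subset_closedBall h.1, h.2⟩, h.1⟩, fun h => ⟨h.2, h.1.2⟩⟩
  have hS : IsCompact S := by
    rw [hSc]
    exact hN.inter_right Metric.isClosed_sphere
  obtain ⟨X, hX, hXs, hX1, hX2⟩ := exists_adapted_field hU hg hN (fun x hx => hεU hx.1) hS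
    (by rw [hSc]; exact Set.inter_subset_left)
    (fun x hx => hgs x (hεU hx.1) fun h => by
      have := hx.2
      rw [h, hgf, hf0, norm_zero] at this
      exact hη.ne this)
    (fun x hx => by
      have hxQ : x ∈ Q := by
        by_contra hxQ
        have := hmin x ⟨hx.1, hxQ⟩
        rw [hx.2] at this
        linarith
      exact Eventually.self_of_nhds (x := x)
        (p := fun y => Function.Surjective ((fderiv ℝ g y).prod (innerSL ℝ y))) hxQ)
  obtain ⟨φ, hφ, hφ'⟩ := exists_tube_flow (g := g) (η := η) hε hX hXs
    (fun x hx => by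
      filter_upwards [hU.mem_nhds (hεU hx)] with y hy
      exact (hg y hy).differentiableAt)
    (fun x hx h => hX1 x ⟨hx, h⟩)
    (fun x hx h => hX2 x ⟨mem_sphere_zero_iff_norm.2 hx, h⟩) Real.two_pi_pos
  have hset : {x ∈ Metric.closedBall (0 : EuclideanSpace ℝ (Fin (n + 2))) ε | ‖f x‖ = η} = N := by
    ext x
    simp only [N, hgf]
  rw [hset]
  refine ⟨fun x => ⟨f x, (hgf x).symm.trans x.2.2⟩, fun x => rfl, ?_⟩
  refine isLocTrivFib_of_rotation (q := fun w => L w) (φ := φ) ?_ ?_ ?_ hη ?_ hφ ?_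
  · refine Continuous.subtype_mk ?_ _
    exact (hf.continuousOn.mono hεU).comp_continuous continuous_subtype_val fun x => x.2.1
  · exact L.continuous.comp continuous_subtype_val
  · exact L.injective.comp Subtype.val_injective
  · exact fun w => (L.norm_map _).trans w.2
  · exact fun t ht z => hφ' t ht z
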